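/- The following three problems are pairwise effectively interreducible (each many-one reduces to each other via total computable functions on codes): (1) HyperCTL* countable satisfiability, i.e. the set of codes of HyperCTL* sentences having a model with countably many vertices; (2) HyperCTL* finitely-branching satisfiability, i.e. the set of codes of HyperCTL* sentences having a model in which every vertex has only finitely many successors; (3) truth in second-order arithmetic, i.e. the set of codes of sentences of second-order arithmetic that hold in the standard model (ℕ, 0, 1, +, ·, <, ∈). -/

import Mathlib

/-! ### Transition systems and HyperCTL* -/

/-- A transition system over `AP`: every vertex has an outgoing edge. -/
structure TS (AP : Type) : Type 1 where
  V : Type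
  E : V → V → Prop
  vI : V
  lab : V → Set AP
  succ : ∀ v, ∃ w, E v w

/-- A path through a transition system. -/
def TS.IsPath {AP : Type} (S : TS AP) (ρ : ℕ → S.V) : Prop :=
  ∀ i, S.E (ρ i) (ρ (i + 1))

/-- HyperCTL* formulas; path variables are natural numbers. -/
inductive CTL (AP : Type) : Type where
  | atom : AP → ℕ → CTL AP
  | neg  : CTL AP → CTL AP
  | disj : CTL AP → CTL AP → CTL AP
  | next : CTL AP → CTL AP
  | untl : CTL AP → CTL AP → CTL AP
  | ex   : ℕ → CTL AP → CTL AP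
  | all  : ℕ → CTL AP → CTL AP

/-- Semantics of HyperCTL* w.r.t. a path assignment `As` and the variable `r`
most recently added to the assignment: quantified paths start at the first
vertex of the most recently assigned path. -/
def CTL.sat {AP : Type} (S : TS AP) : CTL AP → (ℕ → ℕ → S.V) → ℕ → Prop
  | .atom a x, As, _ => a ∈ S.lab (As x 0)
  | .neg φ, As, r => ¬ φ.sat S As r
  | .disj φ ψ, As, r => φ.sat S As r ∨ ψ.sat S As r
  | .next φ, As, r => φ.sat S (fun x i => As x (i + 1)) r
  | .untl φ ψ, As, r =>
      ∃ j, ψ.sat S (fun x i => As x (i + j)) r ∧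
        ∀ j' < j, φ.sat S (fun x i => As x (i + j')) r
  | .ex x φ, As, r => ∃ ρ : ℕ → S.V, S.IsPath ρ ∧ ρ 0 = As r 0 ∧
      φ.sat S (Function.update As x ρ) x
  | .all x φ, As, r => ∀ ρ : ℕ → S.V, S.IsPath ρ → ρ 0 = As r 0 →
      φ.sat S (Function.update As x ρ) x

def CTL.freeVars {AP : Type} : CTL AP → Set ℕ
  | .atom _ x => {x}
  | .neg φ => φ.freeVars
  | .disj φ ψ => φ.freeVars ∪ ψ.freeVars
  | .next φ => φ.freeVars
  | .untl φ ψ => φ.freeVars ∪ ψ.freeVars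
  | .ex x φ => φ.freeVars \ {x}
  | .all x φ => φ.freeVars \ {x}

/-- Every temporal operator occurs in the scope of a path quantifier. -/
def CTL.guarded {AP : Type} : CTL AP → Prop
  | .atom _ _ => True
  | .neg φ => φ.guarded
  | .disj φ ψ => φ.guarded ∧ ψ.guarded
  | .next _ => False
  | .untl _ _ => False
  | .ex _ _ => True
  | .all _ _ => True

/-- A HyperCTL* sentence: no free variables and all temporal operators occur
under a path quantifier. -/
def CTL.IsSentence {AP : Type} (φ : CTL AP) : Prop := φ.freeVars = ∅ ∧ φ.guarded

/-- `S ⊨ φ`: satisfaction w.r.t. the empty assignment, i.e. quantification of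
the first path starts at the initial vertex (for sentences the choice of the
initial dummy path is irrelevant). -/
def CModels {AP : Type} (S : TS AP) (φ : CTL AP) : Prop :=
  ∀ ρ : ℕ → S.V, S.IsPath ρ → ρ 0 = S.vI → φ.sat S (fun _ => ρ) 0

/-- A fixed computable injective encoding of HyperCTL* formulas. -/
def CTL.code : CTL ℕ → ℕ
  | .atom a x => Nat.pair 0 (Nat.pair a x)
  | .neg φ => Nat.pair 1 φ.code
  | .disj φ ψ => Nat.pair 2 (Nat.pair φ.code ψ.code)
  | .next φ => Nat.pair 3 φ.code
  | .untl φ ψ => Nat.pair 4 (Nat.pair φ.code ψ.code)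
  | .ex x φ => Nat.pair 5 (Nat.pair x φ.code)
  | .all x φ => Nat.pair 6 (Nat.pair x φ.code)

/-- `A` many-one reduces to `B` via a total computable function. -/
def ManyOneRed (A B : Set ℕ) : Prop :=
  ∃ f : ℕ → ℕ, Computable f ∧ ∀ x, x ∈ A ↔ f x ∈ B

/-! ### Second-order arithmetic -/

/-- Terms of arithmetic (signature 0,1,+,·) with number variables and
applications of type-1 function variables (second-order objects, equivalently
sets of naturals). -/
inductive ATerm : Type where
  | var : ℕ → ATerm
  | zero : ATerm
  | one : ATerm
  | add : ATerm → ATerm → ATerm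
  | mul : ATerm → ATerm → ATerm
  | app : ℕ → ATerm → ATerm

def ATerm.eval : ATerm → (ℕ → ℕ) → (ℕ → ℕ → ℕ) → ℕ
  | .var x, v, _ => v x
  | .zero, _, _ => 0
  | .one, _, _ => 1
  | .add s t, v, F => s.eval v F + t.eval v F
  | .mul s t, v, F => s.eval v F * t.eval v F
  | .app f t, v, F => F f (t.eval v F)

def ATerm.freeN : ATerm → Set ℕ
  | .var x => {x}
  | .zero => ∅
  | .one => ∅
  | .add s t => s.freeN ∪ t.freeN
  | .mul s t => s.freeN ∪ t.freeN
  | .app _ t => t.freeN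

def ATerm.freeF : ATerm → Set ℕ
  | .var _ => ∅
  | .zero => ∅
  | .one => ∅
  | .add s t => s.freeF ∪ t.freeF
  | .mul s t => s.freeF ∪ t.freeF
  | .app f t => insert f t.freeF

/-- Formulas of second-order arithmetic: quantification over naturals and over
functions ℕ → ℕ (equivalently, sets of naturals). -/
inductive SOForm : Type where
  | eq : ATerm → ATerm → SOForm
  | lt : ATerm → ATerm → SOForm
  | neg : SOForm → SOForm
  | disj : SOForm → SOForm → SOForm
  | exN : ℕ → SOForm → SOForm
  | allN : ℕ → SOForm → SOForm
  | exF : ℕ → SOForm → SOForm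
  | allF : ℕ → SOForm → SOForm

def SOForm.sat : SOForm → (ℕ → ℕ) → (ℕ → ℕ → ℕ) → Prop
  | .eq s t, v, F => s.eval v F = t.eval v F
  | .lt s t, v, F => s.eval v F < t.eval v F
  | .neg φ, v, F => ¬ φ.sat v F
  | .disj φ ψ, v, F => φ.sat v F ∨ ψ.sat v F
  | .exN x φ, v, F => ∃ n : ℕ, φ.sat (Function.update v x n) F
  | .allN x φ, v, F => ∀ n : ℕ, φ.sat (Function.update v x n) F
  | .exF x φ, v, F => ∃ h : ℕ → ℕ, φ.sat v (Function.update F x h)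
  | .allF x φ, v, F => ∀ h : ℕ → ℕ, φ.sat v (Function.update F x h)

def SOForm.freeN : SOForm → Set ℕ
  | .eq s t => s.freeN ∪ t.freeN
  | .lt s t => s.freeN ∪ t.freeN
  | .neg φ => φ.freeN
  | .disj φ ψ => φ.freeN ∪ ψ.freeN
  | .exN x φ => φ.freeN \ {x}
  | .allN x φ => φ.freeN \ {x}
  | .exF _ φ => φ.freeN
  | .allF _ φ => φ.freeN

def SOForm.freeF : SOForm → Set ℕ
  | .eq s t => s.freeF ∪ t.freeF
  | .lt s t => s.freeF ∪ t.freeF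
  | .neg φ => φ.freeF
  | .disj φ ψ => φ.freeF ∪ ψ.freeF
  | .exN _ φ => φ.freeF
  | .allN _ φ => φ.freeF
  | .exF x φ => φ.freeF \ {x}
  | .allF x φ => φ.freeF \ {x}

/-- A sentence of second-order arithmetic. -/
def SOForm.IsSentence (φ : SOForm) : Prop := φ.freeN = ∅ ∧ φ.freeF = ∅

/-- Truth in the standard model of second-order arithmetic. -/
def SOTrue (φ : SOForm) : Prop := φ.sat (fun _ => 0) (fun _ _ => 0)

/-- A fixed computable injective encoding of second-order arithmetic. -/
def ATerm.code : ATerm → ℕ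
  | .var x => Nat.pair 0 x
  | .zero => Nat.pair 1 0
  | .one => Nat.pair 2 0
  | .add s t => Nat.pair 3 (Nat.pair s.code t.code)
  | .mul s t => Nat.pair 4 (Nat.pair s.code t.code)
  | .app f t => Nat.pair 5 (Nat.pair f t.code)

def SOForm.code : SOForm → ℕ
  | .eq s t => Nat.pair 0 (Nat.pair s.code t.code)
  | .lt s t => Nat.pair 1 (Nat.pair s.code t.code)
  | .neg φ => Nat.pair 2 φ.code
  | .disj φ ψ => Nat.pair 3 (Nat.pair φ.code ψ.code)
  | .exN x φ => Nat.pair 4 (Nat.pair x φ.code)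
  | .allN x φ => Nat.pair 5 (Nat.pair x φ.code)
  | .exF x φ => Nat.pair 6 (Nat.pair x φ.code)
  | .allF x φ => Nat.pair 7 (Nat.pair x φ.code)

/-- Codes of HyperCTL* sentences having a countable model. -/
def CTLCountableSatCodes : Set ℕ :=
  {n : ℕ | ∃ φ : CTL ℕ, φ.IsSentence ∧ φ.code = n ∧
    ∃ S : TS ℕ, Countable S.V ∧ CModels S φ}

/-- Codes of HyperCTL* sentences having a finitely-branching model. -/
def CTLFinBranchSatCodes : Set ℕ :=
  {n : ℕ | ∃ φ : CTL ℕ, φ.IsSentence ∧ φ.code = n ∧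
    ∃ S : TS ℕ, (∀ v : S.V, {w : S.V | S.E v w}.Finite) ∧ CModels S φ}

/-- Codes of true sentences of second-order arithmetic. -/
def SOTruthCodes : Set ℕ :=
  {n : ℕ | ∃ φ : SOForm, φ.IsSentence ∧ φ.code = n ∧ SOTrue φ}

/-!
A functional bisimulation preserves satisfaction, so a countable model may be assumed to have the
naturals as vertices; a finitely branching one too, since only countably many of its vertices are
reachable. Edges, labels and paths are then functions on the naturals, and the semantics of
HyperCTL* can be written out in second-order arithmetic.

Conversely, if each reachable vertex has a successor with the proposition `0` and one without, every
set of naturals is the set of times at which `0` holds along some path. The temporal operators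
provide order and successor on the naturals, represented by singletons. Paths on which the
propositions `1`, `2`, `3` mark `n`, `m`, `k` let the natural `k` code the pair `(n, m)`, so sets
also represent binary relations, in particular functions. Addition and multiplication are the least
relations closed under their recursion rules. These requirements on the transition system are
themselves expressible, and they hold in a system that is both countable and finitely branching:
its vertices carry a clock and two registers, each of which may store the current time once.
-/

open Encodable Function

attribute [fun_prop] Primrec Primrec.id Primrec.const Primrec.comp Primrec.fst Primrec.snd
  Primrec.pair Primrec.unpair Primrec.succ Primrec.option_some Primrec.encode

theorem primrec_list_getD_apply {α σ : Type*} [Primcodable α] [Primcodable σ] (d : σ) :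
    ∀ {gs : List (α → σ)}, (∀ g ∈ gs, Primrec g) →
      Primrec₂ fun (k : ℕ) (a : α) => gs.getD k (fun _ => d) a
  | [], _ => by simpa using Primrec₂.const d
  | g :: gs, h => by
    have hg : Primrec g := h g (by simp)
    have hgs := primrec_list_getD_apply d fun g' hg' => h g' (List.mem_cons_of_mem g hg')
    refine (Primrec.nat_casesOn (f := fun p : ℕ × α => p.1) (g := fun p => g p.2)
      (h := fun p k => gs.getD k (fun _ => d) p.2) Primrec.fst (hg.comp Primrec.snd)
      (hgs.comp Primrec.snd (Primrec.snd.comp Primrec.fst)).to₂).of_eq ?_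
    rintro ⟨_ | k, a⟩ <;> simp

section Compositional

variable {α β σ : Type*} [Primcodable α] [Primcodable β] [Primcodable σ]

@[fun_prop]
theorem primrec_option_bind {f : α → Option β} {g : α → β → Option σ} (hf : Primrec f)
    (hg : Primrec fun p : α × β => g p.1 p.2) : Primrec fun a => (f a).bind (g a) :=
  Primrec.option_bind hf hg

@[fun_prop]
theorem primrec_option_map {f : α → Option β} {g : α → β → σ} (hf : Primrec f)
    (hg : Primrec fun p : α × β => g p.1 p.2) : Primrec fun a => (f a).map (g a) :=
  Primrec.option_map hf hg

@[fun_prop]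
theorem primrec_ite_eq [DecidableEq β] {f g : α → β} {u v : α → σ} (hf : Primrec f)
    (hg : Primrec g) (hu : Primrec u) (hv : Primrec v) :
    Primrec fun a => if f a = g a then u a else v a :=
  Primrec.ite (Primrec.eq.comp hf hg) hu hv

@[fun_prop]
theorem primrec_list_cons {f : α → β} {l : α → List β} (hf : Primrec f) (hl : Primrec l) :
    Primrec fun a => f a :: l a :=
  Primrec.list_cons.comp hf hl

@[fun_prop]
theorem primrec_list_getD {l : α → List β} (i : ℕ) (b : β) (hl : Primrec l) :
    Primrec fun a => (l a).getD i b :=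
  (Primrec.list_getD b).comp hl (Primrec.const i)

end Compositional

theorem primrec_of_pair_rec {σ : Type*} [Primcodable σ] {f g₀ : ℕ → σ} {d : σ}
    {gs : List (ℕ × σ × σ × σ → σ)} (hg₀ : Primrec g₀) (hgs : ∀ g ∈ gs, Primrec g)
    (h₀ : ∀ m, f (Nat.pair 0 m) = g₀ m)
    (hsucc : ∀ k m, f (Nat.pair (k + 1) m) =
      gs.getD k (fun _ => d) (m, f m, f m.unpair.1, f m.unpair.2)) :
    Primrec f := by
  let args (n : ℕ) : List ℕ :=
    if n.unpair.1 = 0 then [] else [n.unpair.2, n.unpair.2.unpair.1, n.unpair.2.unpair.2]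
  let step (n : ℕ) (s : List σ) : Option σ := Nat.casesOn n.unpair.1 (some (g₀ n.unpair.2))
    fun k => some (gs.getD k (fun _ => d)
      (n.unpair.2, s.getD 0 d, s.getD 1 d, s.getD 2 d))
  have args_primrec : Primrec args := by unfold args; fun_prop
  have step_primrec : Primrec₂ step :=
    Primrec.nat_casesOn (by fun_prop) (by fun_prop) <| Primrec.option_some.comp <|
      (primrec_list_getD_apply d hgs).comp Primrec.snd (by fun_prop)
  refine Primrec.nat_omega_rec' f (m := id) (l := args) (g := step) Primrec.id args_primrec
    step_primrec (fun n i hi => ?_) fun n => ?_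
  · obtain ⟨k, m, rfl⟩ : ∃ k m, n = Nat.pair k m := ⟨_, _, (Nat.pair_unpair n).symm⟩
    have hm := Nat.add_le_pair k m
    have hm₁ := Nat.unpair_left_le m
    have hm₂ := Nat.unpair_right_le m
    by_cases hk : k = 0
    · simp [args, hk] at hi
    · simp only [args, Nat.unpair_pair, hk, if_false, List.mem_cons, List.not_mem_nil,
        or_false] at hi
      simp only [id_eq]
      omega
  · obtain ⟨k, m, rfl⟩ : ∃ k m, n = Nat.pair k m := ⟨_, _, (Nat.pair_unpair n).symm⟩
    cases k <;> simp [step, args, h₀, hsucc]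

@[fun_prop]
theorem primrec_nat_add {α : Type*} [Primcodable α] {f g : α → ℕ} (hf : Primrec f)
    (hg : Primrec g) : Primrec fun a => f a + g a :=
  Primrec.nat_add.comp hf hg

@[fun_prop]
theorem primrec_nat_pair {α : Type*} [Primcodable α] {f g : α → ℕ} (hf : Primrec f)
    (hg : Primrec g) : Primrec fun a => Nat.pair (f a) (g a) :=
  Primrec₂.natPair.comp hf hg

theorem primrec_of_map_decode {α σ : Type*} [Primcodable α] [Primcodable σ] {f : α → σ}
    (h : Primrec fun n => (decode (α := α) n).map f) : Primrec f :=
  Primrec.option_some_iff.1 <| (h.comp Primrec.encode).of_eq fun a => by simp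

/-- The `Primcodable` structure on `α` whose encoding is a given injection `c : α → ℕ` that has
decidable range in the primitive recursive sense. -/
noncomputable abbrev primcodableOfCode {α : Type*} {c : α → ℕ} (hc : Injective c)
    (h : Primrec fun n => (partialInv c n).map c) : Primcodable α where
  encode := c
  decode := partialInv c
  encodek _ := partialInv_left hc _
  prim := (Primrec.nat_iff.1 (Primrec.encode.comp h)).of_eq fun n => by
    cases partialInv c n <;> rfl

/-! ### Coding terms and formulas -/

namespace ATerm

theorem code_injective : Injective code := by
  intro s
  induction s <;> rintro ⟨⟩ <;> simp_all [code] <;> grind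

theorem partialInv_code_pair (k m : ℕ) :
    partialInv code (Nat.pair k m) =
      match k with
      | 0 => some (.var m)
      | 1 => if m = 0 then some .zero else none
      | 2 => if m = 0 then some .one else none
      | 3 => (partialInv code m.unpair.1).bind fun s =>
          (partialInv code m.unpair.2).map (.add s)
      | 4 => (partialInv code m.unpair.1).bind fun s =>
          (partialInv code m.unpair.2).map (.mul s)
      | 5 => (partialInv code m.unpair.2).map (.app m.unpair.1)
      | _ => none := by
  obtain ⟨x, y, rfl⟩ : ∃ x y, m = Nat.pair x y := ⟨_, _, (Nat.pair_unpair m).symm⟩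
  ext t
  have h (t n) : partialInv code n = some t ↔ t.code = n := code_injective.isPartialInv t n
  rw [h]
  split <;> cases t <;> simp [code, h, Option.bind_eq_some_iff] <;> aesop

theorem primrec_map_partialInv_code {σ : Type*} [Primcodable σ] {f : ATerm → σ}
    (var : ℕ → σ) (zero one : σ) (add mul : σ → σ → σ) (app : ℕ → σ → σ)
    (hvar : Primrec var := by fun_prop)
    (hadd : Primrec (fun p : σ × σ => add p.1 p.2) := by fun_prop)
    (hmul : Primrec (fun p : σ × σ => mul p.1 p.2) := by fun_prop)
    (happ : Primrec (fun p : ℕ × σ => app p.1 p.2) := by fun_prop)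
    (f_var : ∀ x, f (.var x) = var x := by intros; rfl)
    (f_zero : f .zero = zero := by rfl) (f_one : f .one = one := by rfl)
    (f_add : ∀ s t, f (.add s t) = add (f s) (f t) := by intros; rfl)
    (f_mul : ∀ s t, f (.mul s t) = mul (f s) (f t) := by intros; rfl)
    (f_app : ∀ x t, f (.app x t) = app x (f t) := by intros; rfl) :
    Primrec fun n => (partialInv code n).map f := by
  refine primrec_of_pair_rec (d := none) (g₀ := fun x => some (var x))
    (gs := [fun p => if p.1 = 0 then some zero else none,
      fun p => if p.1 = 0 then some one else none,
      fun p => p.2.2.1.bind fun a => p.2.2.2.map (add a),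
      fun p => p.2.2.1.bind fun a => p.2.2.2.map (mul a),
      fun p => p.2.2.2.map (app p.1.unpair.1)])
    (by fun_prop) ?_ (fun m => by simp [partialInv_code_pair, f_var]) fun k m => ?_
  · simp only [List.forall_mem_cons]
    refine ⟨?_, ?_, ?_, ?_, ?_, List.forall_mem_nil _⟩ <;> fun_prop
  · rw [partialInv_code_pair]
    rcases k with _ | _ | _ | _ | _ | _ <;>
      simp [Option.map_if, Option.map_bind, Option.bind_map, comp_def, *]

noncomputable instance : Primcodable ATerm :=
  primcodableOfCode code_injective <| primrec_map_partialInv_code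
    (var := Nat.pair 0) (zero := Nat.pair 1 0) (one := Nat.pair 2 0)
    (add := fun m n => Nat.pair 3 (Nat.pair m n)) (mul := fun m n => Nat.pair 4 (Nat.pair m n))
    (app := fun x n => Nat.pair 5 (Nat.pair x n))

section Constructors

variable {α : Type*} [Primcodable α] {x : α → ℕ} {s t : α → ATerm}

@[fun_prop]
theorem primrec_add (hs : Primrec s) (ht : Primrec t) : Primrec fun a => add (s a) (t a) :=
  Primrec.encode_iff.1
    (by fun_prop : Primrec fun a => Nat.pair 3 (Nat.pair (encode (s a)) (encode (t a))))

@[fun_prop]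
theorem primrec_mul (hs : Primrec s) (ht : Primrec t) : Primrec fun a => mul (s a) (t a) :=
  Primrec.encode_iff.1
    (by fun_prop : Primrec fun a => Nat.pair 4 (Nat.pair (encode (s a)) (encode (t a))))

@[fun_prop]
theorem primrec_app (hx : Primrec x) (ht : Primrec t) : Primrec fun a => app (x a) (t a) :=
  Primrec.encode_iff.1
    (by fun_prop : Primrec fun a => Nat.pair 5 (Nat.pair (x a) (encode (t a))))

end Constructors

end ATerm

namespace SOForm

theorem code_injective : Injective code := by
  intro φ
  induction φ <;> rintro ⟨⟩ <;> simp_all [code, ATerm.code_injective.eq_iff] <;> grind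

theorem partialInv_code_pair (k m : ℕ) :
    partialInv code (Nat.pair k m) =
      match k with
      | 0 => (partialInv ATerm.code m.unpair.1).bind fun s =>
          (partialInv ATerm.code m.unpair.2).map (.eq s)
      | 1 => (partialInv ATerm.code m.unpair.1).bind fun s =>
          (partialInv ATerm.code m.unpair.2).map (.lt s)
      | 2 => (partialInv code m).map .neg
      | 3 => (partialInv code m.unpair.1).bind fun φ =>
          (partialInv code m.unpair.2).map (.disj φ)
      | 4 => (partialInv code m.unpair.2).map (.exN m.unpair.1)
      | 5 => (partialInv code m.unpair.2).map (.allN m.unpair.1)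
      | 6 => (partialInv code m.unpair.2).map (.exF m.unpair.1)
      | 7 => (partialInv code m.unpair.2).map (.allF m.unpair.1)
      | _ => none := by
  obtain ⟨x, y, rfl⟩ : ∃ x y, m = Nat.pair x y := ⟨_, _, (Nat.pair_unpair m).symm⟩
  ext φ
  have h (φ n) : partialInv code n = some φ ↔ φ.code = n := code_injective.isPartialInv φ n
  have hT (t n) : partialInv ATerm.code n = some t ↔ t.code = n :=
    ATerm.code_injective.isPartialInv t n
  rw [h]
  split <;> cases φ <;> simp [code, h, hT, Option.bind_eq_some_iff] <;> aesop

theorem primrec_map_partialInv_code {σ : Type*} [Primcodable σ] {f : SOForm → σ}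
    (eq lt : ATerm → ATerm → σ) (neg : σ → σ) (disj : σ → σ → σ)
    (exN allN exF allF : ℕ → σ → σ)
    (heq : Primrec (fun p : ATerm × ATerm => eq p.1 p.2) := by fun_prop)
    (hlt : Primrec (fun p : ATerm × ATerm => lt p.1 p.2) := by fun_prop)
    (hneg : Primrec neg := by fun_prop)
    (hdisj : Primrec (fun p : σ × σ => disj p.1 p.2) := by fun_prop)
    (hexN : Primrec (fun p : ℕ × σ => exN p.1 p.2) := by fun_prop)
    (hallN : Primrec (fun p : ℕ × σ => allN p.1 p.2) := by fun_prop)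
    (hexF : Primrec (fun p : ℕ × σ => exF p.1 p.2) := by fun_prop)
    (hallF : Primrec (fun p : ℕ × σ => allF p.1 p.2) := by fun_prop)
    (f_eq : ∀ s t, f (.eq s t) = eq s t := by intros; rfl)
    (f_lt : ∀ s t, f (.lt s t) = lt s t := by intros; rfl)
    (f_neg : ∀ φ, f (.neg φ) = neg (f φ) := by intros; rfl)
    (f_disj : ∀ φ ψ, f (.disj φ ψ) = disj (f φ) (f ψ) := by intros; rfl)
    (f_exN : ∀ x φ, f (.exN x φ) = exN x (f φ) := by intros; rfl)
    (f_allN : ∀ x φ, f (.allN x φ) = allN x (f φ) := by intros; rfl)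
    (f_exF : ∀ x φ, f (.exF x φ) = exF x (f φ) := by intros; rfl)
    (f_allF : ∀ x φ, f (.allF x φ) = allF x (f φ) := by intros; rfl) :
    Primrec fun n => (partialInv code n).map f := by
  have decode_primrec : Primrec (partialInv ATerm.code) := Primrec.decode
  refine primrec_of_pair_rec (d := none)
    (g₀ := fun m => (partialInv ATerm.code m.unpair.1).bind fun s =>
      (partialInv ATerm.code m.unpair.2).map (eq s))
    (gs := [fun p => (partialInv ATerm.code p.1.unpair.1).bind fun s =>
        (partialInv ATerm.code p.1.unpair.2).map (lt s),
      fun p => p.2.1.map neg,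
      fun p => p.2.2.1.bind fun a => p.2.2.2.map (disj a),
      fun p => p.2.2.2.map (exN p.1.unpair.1),
      fun p => p.2.2.2.map (allN p.1.unpair.1),
      fun p => p.2.2.2.map (exF p.1.unpair.1),
      fun p => p.2.2.2.map (allF p.1.unpair.1)])
    (by fun_prop) ?_ (fun m => ?_) fun k m => ?_
  · simp only [List.forall_mem_cons]
    refine ⟨?_, ?_, ?_, ?_, ?_, ?_, ?_, List.forall_mem_nil _⟩ <;> fun_prop
  · simp [partialInv_code_pair, Option.map_bind, comp_def, f_eq]
  · rw [partialInv_code_pair]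
    rcases k with _ | _ | _ | _ | _ | _ | _ | _ <;>
      simp [Option.map_bind, Option.bind_map, comp_def, *]

noncomputable instance : Primcodable SOForm :=
  primcodableOfCode code_injective <| primrec_map_partialInv_code
    (eq := fun s t => Nat.pair 0 (Nat.pair (encode s) (encode t)))
    (lt := fun s t => Nat.pair 1 (Nat.pair (encode s) (encode t)))
    (neg := Nat.pair 2) (disj := fun m n => Nat.pair 3 (Nat.pair m n))
    (exN := fun x n => Nat.pair 4 (Nat.pair x n)) (allN := fun x n => Nat.pair 5 (Nat.pair x n))
    (exF := fun x n => Nat.pair 6 (Nat.pair x n)) (allF := fun x n => Nat.pair 7 (Nat.pair x n))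

section Constructors

variable {α : Type*} [Primcodable α] {x : α → ℕ} {s t : α → ATerm} {φ ψ : α → SOForm}

@[fun_prop]
theorem primrec_eq (hs : Primrec s) (ht : Primrec t) : Primrec fun a => eq (s a) (t a) :=
  Primrec.encode_iff.1
    (by fun_prop : Primrec fun a => Nat.pair 0 (Nat.pair (encode (s a)) (encode (t a))))

@[fun_prop]
theorem primrec_neg (hφ : Primrec φ) : Primrec fun a => neg (φ a) :=
  Primrec.encode_iff.1 (by fun_prop : Primrec fun a => Nat.pair 2 (encode (φ a)))

@[fun_prop]
theorem primrec_disj (hφ : Primrec φ) (hψ : Primrec ψ) : Primrec fun a => disj (φ a) (ψ a) :=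
  Primrec.encode_iff.1
    (by fun_prop : Primrec fun a => Nat.pair 3 (Nat.pair (encode (φ a)) (encode (ψ a))))

@[fun_prop]
theorem primrec_exN (hx : Primrec x) (hφ : Primrec φ) : Primrec fun a => exN (x a) (φ a) :=
  Primrec.encode_iff.1
    (by fun_prop : Primrec fun a => Nat.pair 4 (Nat.pair (x a) (encode (φ a))))

@[fun_prop]
theorem primrec_allN (hx : Primrec x) (hφ : Primrec φ) : Primrec fun a => allN (x a) (φ a) :=
  Primrec.encode_iff.1
    (by fun_prop : Primrec fun a => Nat.pair 5 (Nat.pair (x a) (encode (φ a))))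

@[fun_prop]
theorem primrec_exF (hx : Primrec x) (hφ : Primrec φ) : Primrec fun a => exF (x a) (φ a) :=
  Primrec.encode_iff.1
    (by fun_prop : Primrec fun a => Nat.pair 6 (Nat.pair (x a) (encode (φ a))))

@[fun_prop]
theorem primrec_allF (hx : Primrec x) (hφ : Primrec φ) : Primrec fun a => allF (x a) (φ a) :=
  Primrec.encode_iff.1
    (by fun_prop : Primrec fun a => Nat.pair 7 (Nat.pair (x a) (encode (φ a))))

end Constructors

end SOForm

namespace CTL

theorem code_injective : Injective code := by
  intro φ
  induction φ <;> rintro ⟨⟩ <;> simp_all [code] <;> grind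

theorem partialInv_code_pair (k m : ℕ) :
    partialInv code (Nat.pair k m) =
      match k with
      | 0 => some (.atom m.unpair.1 m.unpair.2)
      | 1 => (partialInv code m).map .neg
      | 2 => (partialInv code m.unpair.1).bind fun φ =>
          (partialInv code m.unpair.2).map (.disj φ)
      | 3 => (partialInv code m).map .next
      | 4 => (partialInv code m.unpair.1).bind fun φ =>
          (partialInv code m.unpair.2).map (.untl φ)
      | 5 => (partialInv code m.unpair.2).map (.ex m.unpair.1)
      | 6 => (partialInv code m.unpair.2).map (.all m.unpair.1)
      | _ => none := by
  obtain ⟨x, y, rfl⟩ : ∃ x y, m = Nat.pair x y := ⟨_, _, (Nat.pair_unpair m).symm⟩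
  ext φ
  have h (φ n) : partialInv code n = some φ ↔ φ.code = n := code_injective.isPartialInv φ n
  rw [h]
  split <;> cases φ <;> simp [code, h, Option.bind_eq_some_iff] <;> aesop

theorem primrec_map_partialInv_code {σ : Type*} [Primcodable σ] {f : CTL ℕ → σ}
    (atom : ℕ → ℕ → σ) (neg next : σ → σ) (disj untl : σ → σ → σ) (ex all : ℕ → σ → σ)
    (hatom : Primrec (fun p : ℕ × ℕ => atom p.1 p.2) := by fun_prop)
    (hneg : Primrec neg := by fun_prop)
    (hnext : Primrec next := by fun_prop)
    (hdisj : Primrec (fun p : σ × σ => disj p.1 p.2) := by fun_prop)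
    (huntl : Primrec (fun p : σ × σ => untl p.1 p.2) := by fun_prop)
    (hex : Primrec (fun p : ℕ × σ => ex p.1 p.2) := by fun_prop)
    (hall : Primrec (fun p : ℕ × σ => all p.1 p.2) := by fun_prop)
    (f_atom : ∀ a x, f (.atom a x) = atom a x := by intros; rfl)
    (f_neg : ∀ φ, f (.neg φ) = neg (f φ) := by intros; rfl)
    (f_next : ∀ φ, f (.next φ) = next (f φ) := by intros; rfl)
    (f_disj : ∀ φ ψ, f (.disj φ ψ) = disj (f φ) (f ψ) := by intros; rfl)
    (f_untl : ∀ φ ψ, f (.untl φ ψ) = untl (f φ) (f ψ) := by intros; rfl)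
    (f_ex : ∀ x φ, f (.ex x φ) = ex x (f φ) := by intros; rfl)
    (f_all : ∀ x φ, f (.all x φ) = all x (f φ) := by intros; rfl) :
    Primrec fun n => (partialInv code n).map f := by
  refine primrec_of_pair_rec (d := none)
    (g₀ := fun m => some (atom m.unpair.1 m.unpair.2))
    (gs := [fun p => p.2.1.map neg,
      fun p => p.2.2.1.bind fun a => p.2.2.2.map (disj a),
      fun p => p.2.1.map next,
      fun p => p.2.2.1.bind fun a => p.2.2.2.map (untl a),
      fun p => p.2.2.2.map (ex p.1.unpair.1),
      fun p => p.2.2.2.map (all p.1.unpair.1)])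
    (by fun_prop) ?_ (fun m => by simp [partialInv_code_pair, f_atom]) fun k m => ?_
  · simp only [List.forall_mem_cons]
    refine ⟨?_, ?_, ?_, ?_, ?_, ?_, List.forall_mem_nil _⟩ <;> fun_prop
  · rw [partialInv_code_pair]
    rcases k with _ | _ | _ | _ | _ | _ | _ <;>
      simp [Option.map_bind, Option.bind_map, comp_def, *]

noncomputable instance : Primcodable (CTL ℕ) :=
  primcodableOfCode code_injective <| primrec_map_partialInv_code
    (atom := fun a x => Nat.pair 0 (Nat.pair a x)) (neg := Nat.pair 1)
    (disj := fun m n => Nat.pair 2 (Nat.pair m n)) (next := Nat.pair 3)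
    (untl := fun m n => Nat.pair 4 (Nat.pair m n)) (ex := fun x n => Nat.pair 5 (Nat.pair x n))
    (all := fun x n => Nat.pair 6 (Nat.pair x n))

section Constructors

variable {α : Type*} [Primcodable α] {x y : α → ℕ} {φ ψ : α → CTL ℕ}

@[fun_prop]
theorem primrec_atom (hx : Primrec x) (hy : Primrec y) : Primrec fun a => atom (x a) (y a) :=
  Primrec.encode_iff.1 (by fun_prop : Primrec fun a => Nat.pair 0 (Nat.pair (x a) (y a)))

@[fun_prop]
theorem primrec_neg (hφ : Primrec φ) : Primrec fun a => neg (φ a) :=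
  Primrec.encode_iff.1 (by fun_prop : Primrec fun a => Nat.pair 1 (encode (φ a)))

@[fun_prop]
theorem primrec_disj (hφ : Primrec φ) (hψ : Primrec ψ) : Primrec fun a => disj (φ a) (ψ a) :=
  Primrec.encode_iff.1
    (by fun_prop : Primrec fun a => Nat.pair 2 (Nat.pair (encode (φ a)) (encode (ψ a))))

@[fun_prop]
theorem primrec_next (hφ : Primrec φ) : Primrec fun a => next (φ a) :=
  Primrec.encode_iff.1 (by fun_prop : Primrec fun a => Nat.pair 3 (encode (φ a)))

@[fun_prop]
theorem primrec_untl (hφ : Primrec φ) (hψ : Primrec ψ) : Primrec fun a => untl (φ a) (ψ a) :=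
  Primrec.encode_iff.1
    (by fun_prop : Primrec fun a => Nat.pair 4 (Nat.pair (encode (φ a)) (encode (ψ a))))

@[fun_prop]
theorem primrec_ex (hx : Primrec x) (hφ : Primrec φ) : Primrec fun a => ex (x a) (φ a) :=
  Primrec.encode_iff.1
    (by fun_prop : Primrec fun a => Nat.pair 5 (Nat.pair (x a) (encode (φ a))))

@[fun_prop]
theorem primrec_all (hx : Primrec x) (hφ : Primrec φ) : Primrec fun a => all (x a) (φ a) :=
  Primrec.encode_iff.1
    (by fun_prop : Primrec fun a => Nat.pair 6 (Nat.pair (x a) (encode (φ a))))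

end Constructors

end CTL

theorem ManyOneRed.trans {A B C : Set ℕ} (hAB : ManyOneRed A B) (hBC : ManyOneRed B C) :
    ManyOneRed A C := by
  obtain ⟨f, hf, hAB⟩ := hAB
  obtain ⟨g, hg, hBC⟩ := hBC
  exact ⟨g ∘ f, hg.comp hf, fun x => (hAB x).trans (hBC (f x))⟩

theorem manyOneRed_of_primrec {α β : Type*} [Primcodable α] [Primcodable β] {A : Set α}
    {B : Set β} {f : α → β} (hf : Primrec f) (hAB : ∀ a, a ∈ A ↔ f a ∈ B) {b₀ : β} (hb₀ : b₀ ∉ B) :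
    ManyOneRed (encode '' A) (encode '' B) := by
  refine ⟨fun n => ((decode₂ α n).map fun a => encode (f a)).getD (encode b₀), Primrec.to_comp <|
    Primrec.option_getD.comp (Primrec.option_map Primrec.decode₂
      (Primrec.encode.comp (hf.comp Primrec.snd))) (Primrec.const _),
    fun n => ?_⟩
  cases h : decode₂ α n with
  | none =>
    have hn : n ∉ encode '' A := fun ⟨a, _, ha⟩ => by simp [← ha] at h
    simpa [hn, h] using hb₀
  | some a =>
    rw [← decode₂_eq_some.1 h]
    simp [encode_injective.mem_set_image, hAB]

theorem CTL.primrecPred_guarded : PrimrecPred (CTL.guarded (AP := ℕ)) := by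
  classical
  refine ⟨inferInstance, primrec_of_map_decode <| CTL.primrec_map_partialInv_code
    (atom := fun _ _ => true) (neg := id) (next := fun _ => false) (disj := and)
    (untl := fun _ _ => false) (ex := fun _ _ => true) (all := fun _ _ => true)
    (hdisj := Primrec.and) (f_atom := fun _ _ => decide_eq_true trivial)
    (f_next := fun _ => decide_eq_false id) (f_disj := fun φ ψ => ?_)
    (f_untl := fun _ _ => decide_eq_false id) (f_ex := fun _ _ => decide_eq_true trivial)
    (f_all := fun _ _ => decide_eq_true trivial)⟩
  by_cases hφ : φ.guarded <;> by_cases hψ : ψ.guarded <;> simp [CTL.guarded, hφ, hψ]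

/-! ### Paths and bounded morphisms -/

namespace TS

variable {AP : Type}

/-- Every vertex of `S` has only finitely many successors. -/
def FinitelyBranching (S : TS AP) : Prop :=
  ∀ v, {w | S.E v w}.Finite

/-- `v` is reachable from the initial vertex of `S`. -/
def Reachable (S : TS AP) (v : S.V) : Prop :=
  Relation.ReflTransGen S.E S.vI v

theorem IsPath.cons {S : TS AP} {ρ : ℕ → S.V} (hρ : S.IsPath ρ) {v : S.V} (hv : S.E v (ρ 0)) :
    S.IsPath fun i => i.casesOn v ρ
  | 0 => hv
  | i + 1 => hρ i

theorem exists_isPath_of_step {S : TS AP} {P : ℕ → S.V → Prop} {v : S.V} (hv : P 0 v)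
    (hstep : ∀ n v, P n v → ∃ w, S.E v w ∧ P (n + 1) w) :
    ∃ ρ, S.IsPath ρ ∧ ρ 0 = v ∧ ∀ n, P n (ρ n) := by
  choose f hE hP using hstep
  let ρ (n : ℕ) : {w // P n w} := n.rec ⟨v, hv⟩ fun n w => ⟨f n w w.2, hP n w w.2⟩
  exact ⟨fun n => (ρ n).1, fun n => hE n (ρ n).1 (ρ n).2, rfl, fun n => (ρ n).2⟩

theorem exists_isPath (S : TS AP) (v : S.V) : ∃ ρ, S.IsPath ρ ∧ ρ 0 = v := by
  obtain ⟨ρ, hρ, h0, -⟩ :=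
    exists_isPath_of_step (P := fun _ _ => True) (v := v) trivial fun _ v _ => by
      simpa using S.succ v
  exact ⟨ρ, hρ, h0⟩

theorem exists_isPath_of_reflTransGen {S : TS AP} {v w : S.V}
    (h : Relation.ReflTransGen S.E v w) : ∃ ρ, S.IsPath ρ ∧ ρ 0 = v ∧ ∃ n, ρ n = w := by
  induction h using Relation.ReflTransGen.head_induction_on with
  | refl =>
    obtain ⟨ρ, hρ, hρ₀⟩ := S.exists_isPath w
    exact ⟨ρ, hρ, hρ₀, 0, hρ₀⟩
  | head hE _ ih =>
    obtain ⟨ρ, hρ, rfl, n, hn⟩ := ih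
    exact ⟨_, hρ.cons hE, rfl, n + 1, hn⟩

theorem FinitelyBranching.countable_reachable {S : TS AP} (hS : S.FinitelyBranching) :
    {v | S.Reachable v}.Countable := by
  let level (n : ℕ) : Set S.V := n.rec {S.vI} fun _ A => ⋃ v ∈ A, {w | S.E v w}
  have level_finite (n : ℕ) : (level n).Finite := by
    induction n with
    | zero => exact Set.finite_singleton _
    | succ n ih => exact ih.biUnion fun v _ => hS v
  refine (Set.countable_iUnion fun n => (level_finite n).countable).mono fun v hv => ?_
  induction hv with
  | refl => exact Set.mem_iUnion.2 ⟨0, rfl⟩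
  | tail _ hE ih =>
    obtain ⟨n, hn⟩ := Set.mem_iUnion.1 ih
    exact Set.mem_iUnion.2 ⟨n + 1, Set.mem_biUnion hn hE⟩

/-- A functional bisimulation between transition systems: it preserves labels, the initial vertex
and edges, and lifts every edge out of an image vertex. -/
structure BoundedMorphism (S S' : TS AP) where
  toFun : S.V → S'.V
  map_vI : toFun S.vI = S'.vI
  lab_map (v : S.V) : S'.lab (toFun v) = S.lab v
  map_edge {v w : S.V} : S.E v w → S'.E (toFun v) (toFun w)
  lift_edge {v : S.V} {w' : S'.V} : S'.E (toFun v) w' → ∃ w, S.E v w ∧ toFun w = w'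

namespace BoundedMorphism

variable {S S' : TS AP} (g : BoundedMorphism S S')

theorem isPath_comp {ρ : ℕ → S.V} (hρ : S.IsPath ρ) : S'.IsPath (g.toFun ∘ ρ) :=
  fun i => g.map_edge (hρ i)

theorem exists_lift {ρ : ℕ → S'.V} (hρ : S'.IsPath ρ) {v : S.V} (hv : g.toFun v = ρ 0) :
    ∃ σ, S.IsPath σ ∧ σ 0 = v ∧ g.toFun ∘ σ = ρ := by
  obtain ⟨σ, hσ, hσ₀, hlift⟩ := exists_isPath_of_step (P := fun n v => g.toFun v = ρ n) hv
    fun n v hv => g.lift_edge (hv ▸ hρ n)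
  exact ⟨σ, hσ, hσ₀, funext hlift⟩

theorem sat_iff (φ : CTL AP) (As : ℕ → ℕ → S.V) (r : ℕ) :
    φ.sat S' (fun x => g.toFun ∘ As x) r ↔ φ.sat S As r := by
  have comp_update (As : ℕ → ℕ → S.V) (x : ℕ) (σ : ℕ → S.V) :
      update (fun y => g.toFun ∘ As y) x (g.toFun ∘ σ) =
        fun y => g.toFun ∘ update As x σ y := by
    funext y
    obtain rfl | h := eq_or_ne y x <;> simp [*]
  induction φ generalizing As r with
  | atom a x => simp [CTL.sat, g.lab_map]
  | neg _ ih => exact not_congr (ih As r)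
  | disj _ _ ihφ ihψ => exact or_congr (ihφ As r) (ihψ As r)
  | next _ ih => exact ih _ r
  | untl _ _ ihφ ihψ =>
    exact exists_congr fun j => and_congr (ihψ (fun x i => As x (i + j)) r) <|
      forall₂_congr fun j' _ => ihφ (fun x i => As x (i + j')) r
  | ex x _ ih =>
    constructor
    · rintro ⟨ρ, hρ, hρ₀, h⟩
      obtain ⟨σ, hσ, hσ₀, rfl⟩ := g.exists_lift hρ hρ₀.symm
      exact ⟨σ, hσ, hσ₀, (ih _ x).1 (comp_update As x σ ▸ h)⟩
    · rintro ⟨σ, hσ, hσ₀, h⟩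
      exact ⟨g.toFun ∘ σ, g.isPath_comp hσ, congrArg g.toFun hσ₀,
        comp_update As x σ ▸ (ih _ x).2 h⟩
  | all x _ ih =>
    constructor
    · intro h σ hσ hσ₀
      exact (ih _ x).1 (comp_update As x σ ▸
        h (g.toFun ∘ σ) (g.isPath_comp hσ) (congrArg g.toFun hσ₀))
    · intro h ρ hρ hρ₀
      obtain ⟨σ, hσ, hσ₀, rfl⟩ := g.exists_lift hρ hρ₀.symm
      exact comp_update As x σ ▸ (ih _ x).2 (h σ hσ hσ₀)

include g in
theorem models_iff (φ : CTL AP) : CModels S' φ ↔ CModels S φ := by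
  constructor
  · intro h σ hσ hσ₀
    exact (g.sat_iff φ _ 0).1 <| h (g.toFun ∘ σ) (g.isPath_comp hσ) <| by simp [hσ₀, g.map_vI]
  · intro h ρ hρ hρ₀
    obtain ⟨σ, hσ, hσ₀, rfl⟩ := g.exists_lift hρ (g.map_vI.trans hρ₀.symm)
    exact (g.sat_iff φ _ 0).2 (h σ hσ hσ₀)

end BoundedMorphism

/-- The restriction of `S` to its reachable vertices. -/
def reachablePart (S : TS AP) : TS AP where
  V := {v // S.Reachable v}
  E v w := S.E v w
  vI := ⟨S.vI, .refl⟩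
  lab v := S.lab v
  succ v := by
    obtain ⟨w, hw⟩ := S.succ v
    exact ⟨⟨w, v.2.tail hw⟩, hw⟩

/-- The inclusion of the reachable part of `S`, as a bounded morphism. -/
def reachablePartInclusion (S : TS AP) : BoundedMorphism S.reachablePart S where
  toFun := Subtype.val
  map_vI := rfl
  lab_map _ := rfl
  map_edge h := h
  lift_edge {v w} h := ⟨⟨w, v.2.tail h⟩, h, rfl⟩

theorem FinitelyBranching.reachablePart {S : TS AP} (hS : S.FinitelyBranching) :
    S.reachablePart.FinitelyBranching :=
  fun v => (hS v.1).preimage Subtype.val_injective.injOn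

/-- The quadratic pairing of the naturals. Unlike `Nat.pair` it is given by a term of
arithmetic. -/
def polyPair (x y : ℕ) : ℕ :=
  (x + y) * (x + y) + x

theorem polyPair_inj {x y x' y' : ℕ} : polyPair x y = polyPair x' y' ↔ x = x' ∧ y = y' := by
  refine ⟨fun h => ?_, by rintro ⟨rfl, rfl⟩; rfl⟩
  have sqrt_polyPair (x y : ℕ) : (polyPair x y).sqrt = x + y :=
    Nat.sqrt_add_eq _ (by omega)
  have hsum : x + y = x' + y' := by rw [← sqrt_polyPair, h, sqrt_polyPair]
  simp only [polyPair, hsum] at h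
  omega

theorem exists_polyPair_eq_zero_iff (r : ℕ → ℕ → Prop) :
    ∃ f : ℕ → ℕ, ∀ x y, f (polyPair x y) = 0 ↔ r x y := by
  classical
  refine ⟨fun n => if ∃ x y, polyPair x y = n ∧ r x y then 0 else 1, fun x y => ?_⟩
  simp [polyPair_inj, and_assoc]

/-- The transition system on the naturals whose edges and labels are the zeros of `e` and `l`,
read through the quadratic pairing. -/
def ofZeros (e l : ℕ → ℕ) (vI : ℕ) (succ : ∀ v, ∃ w, e (polyPair v w) = 0) : TS ℕ where
  V := ℕ
  E v w := e (polyPair v w) = 0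
  vI := vI
  lab v := {a | l (polyPair a v) = 0}
  succ := succ

theorem exists_boundedMorphism_ofZeros (S : TS ℕ) [Countable S.V] :
    ∃ e l vI succ, Nonempty (BoundedMorphism (ofZeros e l vI succ) S) ∧
      (S.FinitelyBranching → (ofZeros e l vI succ).FinitelyBranching) := by
  have : Nonempty S.V := ⟨S.vI⟩
  obtain ⟨f, hf⟩ := exists_surjective_nat S.V
  let s := surjInv hf
  have f_s (v : S.V) : f (s v) = v := surjInv_eq hf v
  obtain ⟨e, he⟩ := exists_polyPair_eq_zero_iff fun m n => S.E (f m) (f n) ∧ s (f n) = n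
  obtain ⟨l, hl⟩ := exists_polyPair_eq_zero_iff fun a m => a ∈ S.lab (f m)
  have lift_edge {m : ℕ} {w : S.V} (hw : S.E (f m) w) : e (polyPair m (s w)) = 0 := by
    simpa [he, f_s] using hw
  refine ⟨e, l, s S.vI, fun m => (S.succ (f m)).imp' s fun w => lift_edge, ⟨⟨f, f_s _, fun m => ?_,
    fun h => ((he _ _).1 h).1, fun {m w} hw => ⟨s w, lift_edge hw, f_s w⟩⟩⟩, fun hS m => ?_⟩
  · exact Set.ext fun a => (hl a m).symm
  · refine ((hS (f m)).image s).subset fun n hn => ?_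
    obtain ⟨hE, hn⟩ := (he m n).1 hn
    exact ⟨f n, hE, hn⟩

theorem finitelyBranching_ofZeros_iff {e l : ℕ → ℕ} {vI : ℕ}
    {succ : ∀ v, ∃ w, e (polyPair v w) = 0} :
    (ofZeros e l vI succ).FinitelyBranching ↔
      ∃ b : ℕ → ℕ, ∀ v w, e (polyPair v w) = 0 → w < b v := by
  rw [← Classical.skolem (p := fun v b => ∀ w, e (polyPair v w) = 0 → w < b)]
  refine forall_congr' fun v => ⟨fun h => ?_, fun ⟨b, hb⟩ => (Set.finite_lt_nat b).subset hb⟩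
  obtain ⟨b, hb⟩ := Set.Finite.bddAbove (α := ℕ) h
  exact ⟨b + 1, fun w hw => Nat.lt_succ_of_le (hb hw)⟩

end TS

theorem CTL.exists_countable_model_iff (φ : CTL ℕ) :
    (∃ S : TS ℕ, Countable S.V ∧ CModels S φ) ↔
      ∃ e l vI succ, CModels (TS.ofZeros e l vI succ) φ := by
  constructor
  · rintro ⟨S, _, hφ⟩
    obtain ⟨e, l, vI, succ, ⟨g⟩, -⟩ := S.exists_boundedMorphism_ofZeros
    exact ⟨e, l, vI, succ, (g.models_iff φ).1 hφ⟩
  · rintro ⟨e, l, vI, succ, hφ⟩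
    exact ⟨_, inferInstanceAs (Countable ℕ), hφ⟩

theorem CTL.exists_finitelyBranching_model_iff (φ : CTL ℕ) :
    (∃ S : TS ℕ, S.FinitelyBranching ∧ CModels S φ) ↔
      ∃ e l vI succ, (∃ b : ℕ → ℕ, ∀ v w, e (TS.polyPair v w) = 0 → w < b v) ∧
        CModels (TS.ofZeros e l vI succ) φ := by
  constructor
  · rintro ⟨S, hS, hφ⟩
    have : Countable S.reachablePart.V := hS.countable_reachable
    obtain ⟨e, l, vI, succ, ⟨g⟩, hfin⟩ := S.reachablePart.exists_boundedMorphism_ofZeros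
    exact ⟨e, l, vI, succ, TS.finitelyBranching_ofZeros_iff.1 (hfin hS.reachablePart),
      (g.models_iff φ).1 ((S.reachablePartInclusion.models_iff φ).1 hφ)⟩
  · rintro ⟨e, l, vI, succ, hb, hφ⟩
    exact ⟨_, TS.finitelyBranching_ofZeros_iff.2 hb, hφ⟩

/-! ### HyperCTL* semantics in second-order arithmetic -/

namespace ATerm

/-- The term denoting `TS.polyPair`. -/
def polyPair (s t : ATerm) : ATerm :=
  add (mul (add s t) (add s t)) s

@[simp]
theorem eval_polyPair (s t : ATerm) (v : ℕ → ℕ) (F : ℕ → ℕ → ℕ) :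
    (s.polyPair t).eval v F = TS.polyPair (s.eval v F) (t.eval v F) :=
  rfl

@[simp]
theorem freeN_polyPair (s t : ATerm) : (s.polyPair t).freeN = s.freeN ∪ t.freeN := by
  grind [polyPair, freeN]

@[simp]
theorem freeF_polyPair (s t : ATerm) : (s.polyPair t).freeF = s.freeF ∪ t.freeF := by
  grind [polyPair, freeF]

@[fun_prop]
theorem primrec_polyPair {α : Type*} [Primcodable α] {s t : α → ATerm} (hs : Primrec s)
    (ht : Primrec t) : Primrec fun a => (s a).polyPair (t a) := by
  unfold polyPair; fun_prop

/-- The closed term `0 + 1 + ⋯ + 1` denoting `n`. -/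
def numeral : ℕ → ATerm
  | 0 => zero
  | n + 1 => add (numeral n) one

@[simp]
theorem eval_numeral (n : ℕ) (v : ℕ → ℕ) (F : ℕ → ℕ → ℕ) : (numeral n).eval v F = n := by
  induction n <;> simp_all [numeral, eval]

@[simp]
theorem freeN_numeral (n : ℕ) : (numeral n).freeN = ∅ := by
  induction n <;> simp_all [numeral, freeN]

@[simp]
theorem freeF_numeral (n : ℕ) : (numeral n).freeF = ∅ := by
  induction n <;> simp_all [numeral, freeF]

@[fun_prop]
theorem primrec_numeral {α : Type*} [Primcodable α] {n : α → ℕ} (hn : Primrec n) :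
    Primrec fun a => numeral (n a) := by
  refine Primrec.comp (g := n) ?_ hn
  refine (Primrec.nat_rec₁ (f := fun _ t => add t one) zero (by unfold Primrec₂; fun_prop)).of_eq
    fun n => ?_
  induction n <;> simp_all [numeral]

end ATerm

namespace SOForm

open ATerm (numeral)

variable {φ ψ : SOForm} {v : ℕ → ℕ} {F : ℕ → ℕ → ℕ}

/-- Conjunction, as an abbreviation. -/
def conj (φ ψ : SOForm) : SOForm :=
  neg (disj (neg φ) (neg ψ))

/-- Implication, as an abbreviation. -/
def imp (φ ψ : SOForm) : SOForm :=
  disj (neg φ) ψ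

@[simp]
theorem sat_conj : (conj φ ψ).sat v F ↔ φ.sat v F ∧ ψ.sat v F := by
  simp [conj, sat]

@[simp]
theorem sat_imp : (imp φ ψ).sat v F ↔ (φ.sat v F → ψ.sat v F) := by
  simp [imp, sat, imp_iff_not_or]

@[simp]
theorem freeN_conj : (conj φ ψ).freeN = φ.freeN ∪ ψ.freeN :=
  rfl

@[simp]
theorem freeF_conj : (conj φ ψ).freeF = φ.freeF ∪ ψ.freeF :=
  rfl

@[simp]
theorem freeN_imp : (imp φ ψ).freeN = φ.freeN ∪ ψ.freeN :=
  rfl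

@[simp]
theorem freeF_imp : (imp φ ψ).freeF = φ.freeF ∪ ψ.freeF :=
  rfl

@[fun_prop]
theorem primrec_conj {α : Type*} [Primcodable α] {φ ψ : α → SOForm} (hφ : Primrec φ)
    (hψ : Primrec ψ) : Primrec fun a => conj (φ a) (ψ a) := by
  unfold conj; fun_prop

/-! The formulas below describe a transition system `TS.ofZeros e l vI succ`: the function
variables `1` and `2` stand for `e` and `l`, the function variable `0` for the most recently
assigned path, and the function variable `4 + x` for the path assigned to `x`. The number variable
`0` is the time up to which all paths have been shifted. -/

/-- There is an edge from `s` to `t`. -/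
def edge (s t : ATerm) : SOForm :=
  eq (.app 1 (s.polyPair t)) .zero

/-- The function variable `f` is a path from the current time on. -/
def isPath (f : ℕ) : SOForm :=
  allN 2 (imp (neg (lt (.var 2) (.var 0))) (edge (.app f (.var 2)) (.app f (.add (.var 2) .one))))

/-- `φ` holds at the time given by the number variable `k`. -/
def atTime (k : ℕ) (φ : SOForm) : SOForm :=
  exN 0 (conj (eq (.var 0) (.var k)) φ)

/-- The translation of `CTL.next`. -/
def next (φ : SOForm) : SOForm :=
  exN 1 (conj (eq (.var 1) (.add (.var 0) .one)) (atTime 1 φ))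

/-- The translation of `CTL.untl`. -/
def untl (φ ψ : SOForm) : SOForm :=
  exN 1 (conj (neg (lt (.var 1) (.var 0))) (conj (atTime 1 ψ)
    (allN 2 (imp (conj (neg (lt (.var 2) (.var 0))) (lt (.var 2) (.var 1))) (atTime 2 φ)))))

/-- The translation of `CTL.ex`. -/
def exPath (x : ℕ) (φ : SOForm) : SOForm :=
  exF (4 + x) (conj (isPath (4 + x)) (conj (eq (.app (4 + x) (.var 0)) (.app 0 (.var 0)))
    (exF 0 (conj (allN 2 (eq (.app 0 (.var 2)) (.app (4 + x) (.var 2)))) φ))))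

theorem sat_isPath (f : ℕ) : (isPath f).sat v F ↔
    ∀ i, F 1 (TS.polyPair (F f (v 0 + i)) (F f (v 0 + (i + 1)))) = 0 := by
  simp only [isPath, edge, sat, sat_imp, ATerm.eval, ATerm.eval_polyPair, update_self,
    update_of_ne, ne_eq, OfNat.zero_ne_ofNat, not_false_eq_true, not_lt, ← add_assoc]
  exact ⟨fun h i => h _ (Nat.le_add_right _ i), fun h n hn => by
    simpa [Nat.add_sub_cancel' hn] using h (n - v 0)⟩

theorem sat_atTime {k : ℕ} (hk : k ≠ 0) :
    (atTime k φ).sat v F ↔ φ.sat (update v 0 (v k)) F := by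
  simp [atTime, sat, ATerm.eval, hk]

theorem sat_next : (next φ).sat v F ↔
    φ.sat (update (update v 1 (v 0 + 1)) 0 (v 0 + 1)) F := by
  simp [next, sat, sat_atTime, ATerm.eval]

theorem sat_untl : (untl φ ψ).sat v F ↔
    ∃ m, v 0 ≤ m ∧ ψ.sat (update (update v 1 m) 0 m) F ∧
      ∀ n, v 0 ≤ n ∧ n < m → φ.sat (update (update (update v 1 m) 2 n) 0 n) F := by
  simp [untl, sat, sat_atTime, ATerm.eval]

theorem sat_exPath (x : ℕ) : (exPath x φ).sat v F ↔
    ∃ f, (∀ i, F 1 (TS.polyPair (f (v 0 + i)) (f (v 0 + (i + 1)))) = 0) ∧ f (v 0) = F 0 (v 0) ∧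
      φ.sat v (update (update F (4 + x) f) 0 f) := by
  have eq_comp (g f : ℕ → ℕ) : (∀ n, g n = f n) ↔ g = f := funext_iff.symm
  simp +arith [exPath, sat, sat_isPath, ATerm.eval, eq_comp]

end SOForm

namespace CTL

/-- The assignment of naturals and functions `t, F` describes, from time `t` on, the path
assignment `As` on `X` with most recently assigned variable `r` over the transition system coded
by the functions `e` and `l`. -/
structure Describes (e l : ℕ → ℕ) (X : Set ℕ) (As : ℕ → ℕ → ℕ) (r t : ℕ) (F : ℕ → ℕ → ℕ) :
    Prop where
  edges : F 1 = e
  labels : F 2 = l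
  recent (i : ℕ) : F 0 (t + i) = As r i
  path {x : ℕ} : x ∈ X → ∀ i, F (4 + x) (t + i) = As x i

namespace Describes

variable {e l : ℕ → ℕ} {X Y : Set ℕ} {As : ℕ → ℕ → ℕ} {r t : ℕ} {F : ℕ → ℕ → ℕ}

theorem mono (h : Describes e l X As r t F) (hYX : Y ⊆ X) : Describes e l Y As r t F :=
  { h with path := fun hx => h.path (hYX hx) }

theorem shift (h : Describes e l X As r t F) (j : ℕ) :
    Describes e l X (fun x i => As x (i + j)) r (t + j) F where
  edges := h.edges
  labels := h.labels
  recent i := by rw [add_assoc, add_comm j, h.recent]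
  path hx i := by rw [add_assoc, add_comm j, h.path hx]

theorem update {x : ℕ} (h : Describes e l (X \ {x}) As r t F) (f : ℕ → ℕ) :
    Describes e l X (Function.update As x fun i => f (t + i)) x t
      (Function.update (Function.update F (4 + x) f) 0 f) where
  edges := by simpa +arith using h.edges
  labels := by simpa +arith using h.labels
  recent i := by simp
  path {y} hy i := by
    obtain rfl | hyx := eq_or_ne y x
    · simp +arith
    · simpa +arith [hyx] using h.path ⟨hy, hyx⟩ i

end Describes

/-- The translation of HyperCTL* into second-order arithmetic. -/
def toSO : CTL ℕ → SOForm
  | atom a x => .eq (.app 2 ((ATerm.numeral a).polyPair (.app (4 + x) (.var 0)))) .zero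
  | neg φ => .neg φ.toSO
  | disj φ ψ => .disj φ.toSO ψ.toSO
  | next φ => φ.toSO.next
  | untl φ ψ => φ.toSO.untl ψ.toSO
  | ex x φ => φ.toSO.exPath x
  | all x φ => .neg (φ.toSO.neg.exPath x)

section OfZeros

variable {e l : ℕ → ℕ} {vI : ℕ} {succ : ∀ v, ∃ w, e (TS.polyPair v w) = 0} {φ : CTL ℕ}

theorem sat_ofZeros_ex {x r : ℕ} {As : ℕ → ℕ → ℕ} :
    (ex x φ).sat (TS.ofZeros e l vI succ) As r ↔
      ∃ ρ : ℕ → ℕ, (∀ i, e (TS.polyPair (ρ i) (ρ (i + 1))) = 0) ∧ ρ 0 = As r 0 ∧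
        φ.sat (TS.ofZeros e l vI succ) (update As x ρ) x :=
  Iff.rfl

theorem sat_ofZeros_all {x r : ℕ} {As : ℕ → ℕ → ℕ} :
    (all x φ).sat (TS.ofZeros e l vI succ) As r ↔
      ∀ ρ : ℕ → ℕ, (∀ i, e (TS.polyPair (ρ i) (ρ (i + 1))) = 0) → ρ 0 = As r 0 →
        φ.sat (TS.ofZeros e l vI succ) (update As x ρ) x :=
  Iff.rfl

theorem models_ofZeros_iff : CModels (TS.ofZeros e l vI succ) φ ↔
    ∀ ρ : ℕ → ℕ, (∀ i, e (TS.polyPair (ρ i) (ρ (i + 1))) = 0) → ρ 0 = vI →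
      φ.sat (TS.ofZeros e l vI succ) (fun _ => ρ) 0 :=
  Iff.rfl

end OfZeros

theorem sat_toSO {e l : ℕ → ℕ} {vI : ℕ} {succ : ∀ v, ∃ w, e (TS.polyPair v w) = 0} (φ : CTL ℕ)
    {As : ℕ → ℕ → ℕ} {r : ℕ} {v : ℕ → ℕ} {F : ℕ → ℕ → ℕ}
    (h : Describes e l φ.freeVars As r (v 0) F) :
    φ.toSO.sat v F ↔ φ.sat (TS.ofZeros e l vI succ) As r := by
  have surjective_drop (t : ℕ) : Surjective fun (f : ℕ → ℕ) i => f (t + i) :=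
    (add_right_injective t).surjective_comp_right
  induction φ generalizing As r v F with
  | atom a x => simp [toSO, SOForm.sat, ATerm.eval, sat, TS.ofZeros, h.labels, ← h.path rfl 0]
  | neg φ ih => exact not_congr (ih h)
  | disj φ ψ ihφ ihψ =>
    exact or_congr (ihφ (h.mono Set.subset_union_left)) (ihψ (h.mono Set.subset_union_right))
  | next φ ih => exact SOForm.sat_next.trans (ih (h.shift 1))
  | untl φ ψ ihφ ihψ =>
    have hφ (j : ℕ) := (h.mono Set.subset_union_left).shift j
    have hψ (j : ℕ) := (h.mono Set.subset_union_right).shift j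
    refine SOForm.sat_untl.trans ⟨?_, ?_⟩
    · rintro ⟨m, hm, hψm, hφm⟩
      obtain ⟨j, rfl⟩ := Nat.exists_eq_add_of_le hm
      exact ⟨j, (ihψ (hψ j)).1 hψm, fun j' hj' => (ihφ (hφ j')).1 (hφm _ (by omega))⟩
    · rintro ⟨j, hψj, hφj⟩
      refine ⟨v 0 + j, by omega, (ihψ (hψ j)).2 hψj, fun n ⟨hn, hnj⟩ => ?_⟩
      obtain ⟨j', rfl⟩ := Nat.exists_eq_add_of_le hn
      exact (ihφ (hφ j')).2 (hφj j' (by omega))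
  | ex x φ ih =>
    rw [sat_ofZeros_ex, (surjective_drop (v 0)).exists, toSO, SOForm.sat_exPath, h.edges,
      ← h.recent 0]
    exact exists_congr fun f => and_congr_right' (and_congr_right' (ih (h.update f)))
  | all x φ ih =>
    rw [sat_ofZeros_all, (surjective_drop (v 0)).forall, toSO, SOForm.sat, SOForm.sat_exPath,
      h.edges, ← h.recent 0]
    simp only [not_exists, not_and, SOForm.sat, not_not]
    exact forall_congr' fun f => imp_congr_right fun _ => imp_congr_right fun _ =>
      ih (h.update f)

theorem freeN_toSO_subset (φ : CTL ℕ) : φ.toSO.freeN ⊆ {0} := by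
  induction φ <;>
    simp [toSO, SOForm.freeN, ATerm.freeN, SOForm.next, SOForm.untl, SOForm.exPath,
      SOForm.atTime, SOForm.isPath, SOForm.edge, Set.subset_def] at * <;>
    grind

theorem four_add_mem_freeF_toSO {x : ℕ} (φ : CTL ℕ) :
    4 + x ∈ φ.toSO.freeF ↔ x ∈ φ.freeVars := by
  induction φ <;>
    simp_all +arith [toSO, SOForm.freeF, ATerm.freeF, SOForm.next, SOForm.untl, SOForm.exPath,
      SOForm.atTime, SOForm.isPath, SOForm.edge, freeVars, and_comm, or_comm]

@[fun_prop]
theorem primrec_toSO : Primrec toSO :=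
  primrec_of_map_decode <| primrec_map_partialInv_code
    (atom := fun a x => .eq (.app 2 ((ATerm.numeral a).polyPair (.app (4 + x) (.var 0)))) .zero)
    (neg := .neg) (disj := .disj) (next := .next) (untl := .untl) (ex := .exPath)
    (all := fun x φ => .neg (φ.neg.exPath x))
    (hnext := by unfold SOForm.next SOForm.atTime; fun_prop)
    (huntl := by unfold SOForm.untl SOForm.atTime SOForm.imp; fun_prop)
    (hex := by unfold SOForm.exPath SOForm.isPath SOForm.edge SOForm.imp; fun_prop)
    (hall := by unfold SOForm.exPath SOForm.isPath SOForm.edge SOForm.imp; fun_prop)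

/-- The sentence stating that some transition system `TS.ofZeros e l vI succ` is a model of `φ`,
where `e` and a further function `b` satisfy the condition `side`, in which they are the function
variables `1` and `3`. -/
def modelSentence (side : SOForm) (φ : CTL ℕ) : SOForm :=
  .exF 1 <| .exF 2 <| .exF 3 <| .exN 3 <|
    .conj (.allN 1 (.exN 2 (.edge (.var 1) (.var 2)))) <| .conj side <|
      .exN 0 <| .conj (.eq (.var 0) .zero) <|
        .allF 0 (.imp (.conj (.isPath 0) (.eq (.app 0 (.var 0)) (.var 3))) φ.toSO)

theorem soTrue_modelSentence {side : SOForm} {P : (ℕ → ℕ) → (ℕ → ℕ) → Prop}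
    (hside : ∀ v F, side.sat v F ↔ P (F 1) (F 3)) {φ : CTL ℕ} (hφ : φ.freeVars = ∅) :
    SOTrue (φ.modelSentence side) ↔
      ∃ e l vI succ, (∃ b, P e b) ∧ CModels (TS.ofZeros e l vI succ) φ := by
  have sat_toSO' {e l vI succ} (ρ : ℕ → ℕ) {v : ℕ → ℕ} {F : ℕ → ℕ → ℕ} (hv : v 0 = 0)
      (hρ : F 0 = ρ) (he : F 1 = e) (hl : F 2 = l) :
      φ.toSO.sat v F ↔ φ.sat (TS.ofZeros e l vI succ) (fun _ => ρ) 0 :=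
    sat_toSO φ ⟨he, hl, fun i => by simp [hv, hρ], fun hx => by simp [hφ] at hx⟩
  simp only [SOTrue, modelSentence, SOForm.sat, SOForm.sat_conj, SOForm.sat_imp, hside,
    SOForm.sat_isPath, SOForm.edge, ATerm.eval, ATerm.eval_polyPair, models_ofZeros_iff]
  constructor
  · rintro ⟨e, l, b, vI, succ, hP, _, rfl, h⟩
    refine ⟨e, l, vI, by simpa using succ, ⟨b, by simpa using hP⟩, fun ρ hρ hρ₀ => ?_⟩
    exact (sat_toSO' ρ (by simp) (by simp) (by simp) (by simp)).1 <|
      h ρ ⟨by simpa using hρ, by simpa using hρ₀⟩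
  · rintro ⟨e, l, vI, succ, ⟨b, hP⟩, h⟩
    refine ⟨e, l, b, vI, by simpa using succ, by simpa using hP, 0, rfl, fun ρ ⟨hρ, hρ₀⟩ => ?_⟩
    exact (sat_toSO' ρ (by simp) (by simp) (by simp) (by simp)).2 <|
      h ρ (by simpa using hρ) (by simpa using hρ₀)

theorem isSentence_modelSentence {side : SOForm} (hN : side.freeN = ∅) (hF : side.freeF ⊆ {1, 3})
    (φ : CTL ℕ) : (φ.modelSentence side).IsSentence ↔ φ.freeVars = ∅ := by
  have freeN_eq : (φ.modelSentence side).freeN = ∅ := by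
    have hφ := φ.freeN_toSO_subset
    simp only [modelSentence, SOForm.freeN, SOForm.isPath, SOForm.edge, ATerm.freeN,
      SOForm.freeN_conj, SOForm.freeN_imp, ATerm.freeN_polyPair, hN, Set.subset_def, Set.ext_iff,
      Set.mem_union, Set.mem_sdiff, Set.mem_singleton_iff, Set.mem_empty_iff_false] at hφ ⊢
    grind
  have mem_freeF (f : ℕ) :
      f ∈ (φ.modelSentence side).freeF ↔ ∃ x ∈ φ.freeVars, f = 4 + x := by
    simp only [← four_add_mem_freeF_toSO, modelSentence, SOForm.freeF, SOForm.isPath, SOForm.edge,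
      ATerm.freeF, SOForm.freeF_conj, SOForm.freeF_imp, ATerm.freeF_polyPair, Set.subset_def,
      Set.mem_union, Set.mem_sdiff, Set.mem_singleton_iff, Set.mem_empty_iff_false,
      Set.mem_insert_iff] at hF ⊢
    obtain hf | ⟨x, rfl⟩ := (lt_or_ge f 4).imp_right Nat.exists_eq_add_of_le <;> grind
  rw [SOForm.IsSentence, and_iff_right freeN_eq]
  simp only [Set.eq_empty_iff_forall_notMem, mem_freeF]
  exact ⟨fun h x hx => h _ ⟨x, hx, rfl⟩, fun h _ ⟨x, hx, _⟩ => h x hx⟩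

/-- The condition that every edge `v → w` of the transition system satisfies `w < b v`. -/
def edgesBounded : SOForm :=
  .allN 1 (.allN 2 (.imp (.edge (.var 1) (.var 2)) (.lt (.var 2) (.app 3 (.var 1)))))

theorem sat_edgesBounded (v : ℕ → ℕ) (F : ℕ → ℕ → ℕ) :
    edgesBounded.sat v F ↔ ∀ v w, F 1 (TS.polyPair v w) = 0 → w < F 3 v := by
  simp [edgesBounded, SOForm.sat, SOForm.edge, ATerm.eval]

end CTL

theorem CTLCountableSatCodes_eq : CTLCountableSatCodes =
    encode '' {φ : CTL ℕ | φ.IsSentence ∧ ∃ S : TS ℕ, Countable S.V ∧ CModels S φ} :=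
  Set.ext fun _ => exists_congr fun _ => and_congr_right' and_comm |>.trans and_assoc.symm

theorem CTLFinBranchSatCodes_eq : CTLFinBranchSatCodes =
    encode '' {φ : CTL ℕ | φ.IsSentence ∧ ∃ S : TS ℕ, S.FinitelyBranching ∧ CModels S φ} :=
  Set.ext fun _ => exists_congr fun _ => and_congr_right' and_comm |>.trans and_assoc.symm

theorem SOTruthCodes_eq :
    SOTruthCodes = encode '' {ψ : SOForm | ψ.IsSentence ∧ SOTrue ψ} :=
  Set.ext fun _ => exists_congr fun _ => and_congr_right' and_comm |>.trans and_assoc.symm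

theorem manyOneRed_models_soTruthCodes {side : SOForm} {P : (ℕ → ℕ) → (ℕ → ℕ) → Prop}
    (hN : side.freeN = ∅) (hF : side.freeF ⊆ {1, 3})
    (hside : ∀ v F, side.sat v F ↔ P (F 1) (F 3)) :
    ManyOneRed (encode '' {φ : CTL ℕ | φ.IsSentence ∧
        ∃ e l vI succ, (∃ b, P e b) ∧ CModels (TS.ofZeros e l vI succ) φ}) SOTruthCodes := by
  classical
  have hb₀ : SOForm.lt .zero .zero ∉ {ψ : SOForm | ψ.IsSentence ∧ SOTrue ψ} :=
    fun h => lt_irrefl 0 h.2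
  rw [SOTruthCodes_eq]
  refine manyOneRed_of_primrec (f := fun φ : CTL ℕ =>
    if φ.guarded then φ.modelSentence side else .lt .zero .zero)
    (Primrec.ite CTL.primrecPred_guarded (by unfold CTL.modelSentence SOForm.imp; fun_prop)
      (.const _)) (fun φ => ?_) hb₀
  by_cases hφ : φ.guarded
  · simp only [Set.mem_ofPred_eq, hφ, if_true, CTL.IsSentence, and_true,
      CTL.isSentence_modelSentence hN hF]
    exact and_congr_right fun h => (CTL.soTrue_modelSentence hside h).symm
  · simpa [hφ, CTL.IsSentence] using hb₀

theorem manyOneRed_countableSatCodes_soTruthCodes :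
    ManyOneRed CTLCountableSatCodes SOTruthCodes := by
  have := manyOneRed_models_soTruthCodes (side := .eq .zero .zero) (P := fun _ _ => True)
    (by simp [SOForm.freeN, ATerm.freeN]) (by simp [SOForm.freeF, ATerm.freeF])
    (by simp [SOForm.sat])
  simpa [CTLCountableSatCodes_eq, CTL.exists_countable_model_iff] using this

theorem manyOneRed_finBranchSatCodes_soTruthCodes :
    ManyOneRed CTLFinBranchSatCodes SOTruthCodes := by
  have := manyOneRed_models_soTruthCodes (side := CTL.edgesBounded)
    (P := fun e b => ∀ v w, e (TS.polyPair v w) = 0 → w < b v)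
    (by simp [CTL.edgesBounded, SOForm.edge, SOForm.freeN, ATerm.freeN])
    (by simp [CTL.edgesBounded, SOForm.edge, SOForm.freeF, ATerm.freeF, Set.pair_comm])
    CTL.sat_edgesBounded
  simpa only [CTLFinBranchSatCodes_eq, CTL.exists_finitelyBranching_model_iff] using this

/-! ### Coding relations by sets of naturals -/

namespace TS

variable {S : TS ℕ}

/-- A path from the initial vertex. -/
def IsInitialPath (S : TS ℕ) (ρ : ℕ → S.V) : Prop :=
  S.IsPath ρ ∧ ρ 0 = S.vI

/-- The set of naturals coded by the occurrences of `a` along a path. Position `0` is skipped, as it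
is shared by all paths from the same vertex. -/
def marks (S : TS ℕ) (a : ℕ) (ρ : ℕ → S.V) : Set ℕ :=
  {n | a ∈ S.lab (ρ (n + 1))}

/-- Every set of naturals is coded by an initial path. -/
def Full (S : TS ℕ) : Prop :=
  ∀ X : Set ℕ, ∃ ρ, S.IsInitialPath ρ ∧ S.marks 0 ρ = X

/-- The natural `k` codes the pair `(n, m)`, as witnessed by an initial path on which the
propositions `1`, `2` and `3` mark `n`, `m` and `k`. -/
def PairCode (S : TS ℕ) (n m k : ℕ) : Prop :=
  ∃ ρ, S.IsInitialPath ρ ∧ n ∈ S.marks 1 ρ ∧ m ∈ S.marks 2 ρ ∧ k ∈ S.marks 3 ρ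

/-- The binary relation coded by a set of codes of pairs. -/
def Related (S : TS ℕ) (G : Set ℕ) (n m : ℕ) : Prop :=
  ∃ k ∈ G, S.PairCode n m k

/-- Every pair of naturals has a code and no natural codes two pairs. -/
structure HasPairing (S : TS ℕ) : Prop where
  exists_pairCode (n m : ℕ) : ∃ k, S.PairCode n m k
  pairCode_inj {n m n' m' k : ℕ} : S.PairCode n m k → S.PairCode n' m' k → n = n' ∧ m = m'

theorem HasPairing.exists_related_iff (hS : S.HasPairing) (R : ℕ → ℕ → Prop) :
    ∃ G, ∀ n m, S.Related G n m ↔ R n m := by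
  refine ⟨{k | ∃ n m, R n m ∧ S.PairCode n m k}, fun n m => ⟨?_, fun hR => ?_⟩⟩
  · rintro ⟨k, ⟨n', m', hR, hk'⟩, hk⟩
    obtain ⟨rfl, rfl⟩ := hS.pairCode_inj hk hk'
    exact hR
  · obtain ⟨k, hk⟩ := hS.exists_pairCode n m
    exact ⟨k, ⟨n, m, hR, hk⟩, hk⟩

/-- Since every relation is coded by a set, the graph of `n ↦ s^[n] x₀` is the least coded relation
closed under the recursion rules. -/
theorem HasPairing.eq_iterate_iff (hS : S.HasPairing) (s : ℕ → ℕ) (x₀ n m : ℕ) :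
    m = s^[n] x₀ ↔ ∀ G, (∀ i j, i = 0 ∧ j = x₀ → S.Related G i j) ∧
      (∀ i j i' j', S.Related G i j ∧ i' = i + 1 ∧ j' = s j → S.Related G i' j') →
      S.Related G n m := by
  constructor
  · rintro rfl G ⟨hzero, hsucc⟩
    induction n with
    | zero => exact hzero _ _ ⟨rfl, rfl⟩
    | succ n ih => exact hsucc _ _ _ _ ⟨ih, rfl, iterate_succ_apply' ..⟩
  · intro h
    obtain ⟨G, hG⟩ := hS.exists_related_iff fun i j => j = s^[i] x₀
    refine (hG n m).1 (h G ⟨?_, ?_⟩) <;> simp only [hG]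
    · rintro i j ⟨rfl, rfl⟩
      rfl
    · rintro i j i' j' ⟨rfl, rfl, rfl⟩
      exact (iterate_succ_apply' ..).symm

end TS

namespace CTL

variable {S : TS ℕ} {φ ψ : CTL ℕ} {As : ℕ → ℕ → S.V} {r : ℕ}

/-- Conjunction, as an abbreviation. -/
def conj (φ ψ : CTL ℕ) : CTL ℕ :=
  neg (disj (neg φ) (neg ψ))

/-- Implication, as an abbreviation. -/
def imp (φ ψ : CTL ℕ) : CTL ℕ :=
  disj (neg φ) ψ

/-- `φ` holds now or at some later time. -/
def eventually (φ : CTL ℕ) : CTL ℕ :=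
  untl (disj φ (neg φ)) φ

/-- `φ` holds at some strictly later time. -/
def later (φ : CTL ℕ) : CTL ℕ :=
  next (eventually φ)

/-- The path variables `x` and `y` are marked by `a` and `b`, respectively, at the same time. -/
def meet (a x b y : ℕ) : CTL ℕ :=
  later (conj (atom a x) (atom b y))

@[simp]
theorem sat_conj : (conj φ ψ).sat S As r ↔ φ.sat S As r ∧ ψ.sat S As r := by
  simp [conj, sat]

@[simp]
theorem sat_imp : (imp φ ψ).sat S As r ↔ (φ.sat S As r → ψ.sat S As r) := by
  simp [imp, sat, imp_iff_not_or]

@[simp]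
theorem sat_eventually :
    (eventually φ).sat S As r ↔ ∃ n, φ.sat S (fun x i => As x (i + n)) r := by
  simp [eventually, sat, em]

@[simp]
theorem sat_later : (later φ).sat S As r ↔ ∃ n, φ.sat S (fun x i => As x (i + n + 1)) r := by
  simp [later, sat]

theorem sat_meet {a x b y : ℕ} :
    (meet a x b y).sat S As r ↔ (S.marks a (As x) ∩ S.marks b (As y)).Nonempty := by
  simp [meet, sat, TS.marks, Set.Nonempty]

/-! The formulas below speak about the sets of naturals coded by the proposition `0` along the
paths assigned to their variables; a natural `n` is represented by `{n}`, a binary relation by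
a set of codes of pairs. -/

/-- The formula `x = 0`. -/
def isZero (x : ℕ) : CTL ℕ :=
  next (atom 0 x)

/-- The formula `x = 1`. -/
def isOne (x : ℕ) : CTL ℕ :=
  next (next (atom 0 x))

/-- The formula `x = y`. -/
def isEq (x y : ℕ) : CTL ℕ :=
  meet 0 x 0 y

/-- The formula `x < y`. -/
def isLt (x y : ℕ) : CTL ℕ :=
  later (conj (atom 0 x) (later (atom 0 y)))

/-- The formula `y = x + 1`. -/
def isSucc (x y : ℕ) : CTL ℕ :=
  later (conj (atom 0 x) (next (atom 0 y)))

theorem sat_later_atom {a x : ℕ} :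
    (later (atom a x)).sat S As r ↔ (S.marks a (As x)).Nonempty := by
  simp [sat, TS.marks, Set.Nonempty]

theorem sat_isLt {x y : ℕ} : (isLt x y).sat S As r ↔
    ∃ n ∈ S.marks 0 (As x), ∃ m ∈ S.marks 0 (As y), n < m := by
  simp only [isLt, sat_later, sat_conj, sat, TS.marks, Set.mem_ofPred_eq, zero_add]
  refine exists_congr fun n => and_congr_right fun _ => ⟨?_, ?_⟩
  · rintro ⟨d, hd⟩
    exact ⟨d + 1 + n, hd, by omega⟩
  · rintro ⟨m, hm, hnm⟩
    obtain ⟨d, rfl⟩ := Nat.exists_eq_add_of_lt hnm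
    exact ⟨d, by convert hm using 3; omega⟩

theorem sat_isSucc {x y : ℕ} : (isSucc x y).sat S As r ↔
    ∃ n ∈ S.marks 0 (As x), n + 1 ∈ S.marks 0 (As y) := by
  simp [isSucc, sat, TS.marks, add_comm, add_left_comm]

/-- The formula stating that the relation `g` holds between `x` and `y`. -/
def rel (g x y : ℕ) : CTL ℕ :=
  ex (g + x + y + 1) <| conj (meet 1 (g + x + y + 1) 0 x) <|
    conj (meet 2 (g + x + y + 1) 0 y) (meet 3 (g + x + y + 1) 0 g)

/-- The formula stating that the set `x` is a singleton, i.e. represents a natural. -/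
def isNum (x : ℕ) : CTL ℕ :=
  conj (later (atom 0 x)) (neg (isLt x x))

/-- Existential quantification over the naturals. -/
def exNum (x : ℕ) (φ : CTL ℕ) : CTL ℕ :=
  ex x (conj (isNum x) φ)

/-- Universal quantification over the naturals. -/
def allNum (x : ℕ) (φ : CTL ℕ) : CTL ℕ :=
  all x (imp (isNum x) φ)

/-- `φ` is equivalent to `p` under every assignment of initial paths coding the sets `V`. -/
def Expresses (S : TS ℕ) (V : ℕ → Set ℕ) (φ : CTL ℕ) (p : Prop) : Prop :=
  ∀ ⦃As : ℕ → ℕ → S.V⦄, (∀ x, S.IsInitialPath (As x)) → (∀ x, S.marks 0 (As x) = V x) →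
    ∀ r, φ.sat S As r ↔ p

namespace Expresses

variable {V : ℕ → Set ℕ} {p q : Prop}

theorem congr (hφ : Expresses S V φ p) (h : p ↔ q) : Expresses S V φ q :=
  fun _ hAs hV r => (hφ hAs hV r).trans h

theorem neg (hφ : Expresses S V φ p) : Expresses S V φ.neg (¬p) :=
  fun _ hAs hV r => not_congr (hφ hAs hV r)

theorem disj (hφ : Expresses S V φ p) (hψ : Expresses S V ψ q) :
    Expresses S V (φ.disj ψ) (p ∨ q) :=
  fun _ hAs hV r => or_congr (hφ hAs hV r) (hψ hAs hV r)

theorem conj (hφ : Expresses S V φ p) (hψ : Expresses S V ψ q) :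
    Expresses S V (φ.conj ψ) (p ∧ q) :=
  fun _ hAs hV r => sat_conj.trans (and_congr (hφ hAs hV r) (hψ hAs hV r))

theorem imp (hφ : Expresses S V φ p) (hψ : Expresses S V ψ q) :
    Expresses S V (φ.imp ψ) (p → q) :=
  fun _ hAs hV r => sat_imp.trans (imp_congr (hφ hAs hV r) (hψ hAs hV r))

theorem ex (hS : S.Full) {x : ℕ} {p : Set ℕ → Prop}
    (hφ : ∀ X, Expresses S (update V x X) φ (p X)) : Expresses S V (ex x φ) (∃ X, p X) := by
  intro As hAs hV r
  have sat_iff (ρ) (hρ : S.IsInitialPath ρ) :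
      φ.sat S (update As x ρ) x ↔ p (S.marks 0 ρ) := by
    refine hφ _ (fun y => ?_) (fun y => ?_) x <;> obtain rfl | hy := eq_or_ne y x <;> simp [*]
  simp only [sat, (hAs r).2]
  constructor
  · rintro ⟨ρ, hρ, hρ₀, h⟩
    exact ⟨_, (sat_iff ρ ⟨hρ, hρ₀⟩).1 h⟩
  · rintro ⟨X, hX⟩
    obtain ⟨ρ, hρ, rfl⟩ := hS X
    exact ⟨ρ, hρ.1, hρ.2, (sat_iff ρ hρ).2 hX⟩

theorem all (hS : S.Full) {x : ℕ} {p : Set ℕ → Prop}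
    (hφ : ∀ X, Expresses S (update V x X) φ (p X)) : Expresses S V (all x φ) (∀ X, p X) := by
  intro As hAs hV r
  have := not_congr (ex hS (fun X => (hφ X).neg) hAs hV r)
  simpa [sat] using this

theorem isNum {x : ℕ} : Expresses S V (isNum x) (∃ n, V x = {n}) := by
  intro As _ hV r
  simp only [CTL.isNum, sat_conj, sat, sat_later_atom, sat_isLt, hV,
    Set.exists_eq_singleton_iff_nonempty_subsingleton]
  refine and_congr_right fun _ => ⟨fun h n hn m hm => ?_, ?_⟩
  · by_contra hne
    obtain hlt | hlt := Nat.lt_or_gt_of_ne hne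
    · exact h ⟨n, hn, m, hm, hlt⟩
    · exact h ⟨m, hm, n, hn, hlt⟩
  · rintro h ⟨n, hn, m, hm, hlt⟩
    exact hlt.ne (h hn hm)

theorem exNum (hS : S.Full) {x : ℕ} {p : ℕ → Prop}
    (hφ : ∀ n, Expresses S (update V x {n}) φ (p n)) : Expresses S V (exNum x φ) (∃ n, p n) := by
  refine (ex (p := fun X => ∃ n, X = {n} ∧ p n) hS fun X As hAs hV r => ?_).congr (by aesop)
  rw [sat_conj, isNum hAs hV, update_self]
  constructor
  · rintro ⟨⟨n, rfl⟩, h⟩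
    exact ⟨n, rfl, (hφ n hAs hV r).1 h⟩
  · rintro ⟨n, rfl, h⟩
    exact ⟨⟨n, rfl⟩, (hφ n hAs hV r).2 h⟩

theorem allNum (hS : S.Full) {x : ℕ} {p : ℕ → Prop}
    (hφ : ∀ n, Expresses S (update V x {n}) φ (p n)) : Expresses S V (allNum x φ) (∀ n, p n) := by
  intro As hAs hV r
  have := not_congr (exNum hS (fun n => (hφ n).neg) hAs hV r)
  simpa [CTL.exNum, CTL.allNum, sat] using this

variable {x y g n m : ℕ}

theorem isZero (hx : V x = {n}) : Expresses S V (isZero x) (n = 0) := by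
  intro As _ hV r
  have := Set.ext_iff.1 (hV x) 0
  simpa [CTL.isZero, sat, hx, TS.marks, eq_comm] using this

theorem isOne (hx : V x = {n}) : Expresses S V (isOne x) (n = 1) := by
  intro As _ hV r
  have := Set.ext_iff.1 (hV x) 1
  simpa [CTL.isOne, sat, hx, TS.marks, eq_comm] using this

theorem isEq (hx : V x = {n}) (hy : V y = {m}) : Expresses S V (isEq x y) (n = m) := by
  intro As _ hV r
  simp [CTL.isEq, sat_meet, hV, hx, hy, eq_comm]

theorem isLt (hx : V x = {n}) (hy : V y = {m}) : Expresses S V (isLt x y) (n < m) := by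
  intro As _ hV r
  simp [sat_isLt, hV, hx, hy]

theorem isSucc (hx : V x = {n}) (hy : V y = {m}) : Expresses S V (isSucc x y) (m = n + 1) := by
  intro As _ hV r
  simp [sat_isSucc, hV, hx, hy, eq_comm]

theorem rel (hx : V x = {n}) (hy : V y = {m}) :
    Expresses S V (rel g x y) (S.Related (V g) n m) := by
  intro As hAs hV r
  simp (disch := omega) only [CTL.rel, sat, (hAs r).2, sat_conj, sat_meet, update_self,
    update_of_ne, hV, hx, hy, Set.inter_singleton_nonempty, TS.Related, TS.PairCode,
    TS.IsInitialPath, and_assoc]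
  simp only [Set.Nonempty, Set.mem_inter_iff]
  grind

end Expresses

end CTL

namespace CTL

/-- The formula stating that `c` is obtained from `x₀` by iterating `s` on it `b` times, where
`start` says that `g + 2` is `x₀` and `step` says that `g + 4` is the image of `g + 2` under `s`:
every relation `g` that contains `(0, x₀)` and is closed under `(n, m) ↦ (n + 1, s m)` contains
`(b, c)`. -/
def iter (g : ℕ) (start step : CTL ℕ) (b c : ℕ) : CTL ℕ :=
  all g <| imp
    (conj
      (allNum (g + 1) <| allNum (g + 2) <|
        imp (conj (isZero (g + 1)) start) (rel g (g + 1) (g + 2)))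
      (allNum (g + 1) <| allNum (g + 2) <| allNum (g + 3) <| allNum (g + 4) <|
        imp (conj (rel g (g + 1) (g + 2)) (conj (isSucc (g + 1) (g + 3)) step))
          (rel g (g + 3) (g + 4))))
    (rel g b c)

/-- The formula `c = a + b`, using only bound variables from `g` on. -/
def add (g a b c : ℕ) : CTL ℕ :=
  iter g (isEq (g + 2) a) (isSucc (g + 2) (g + 4)) b c

/-- The formula `c = a * b`, using only bound variables from `g` on. -/
def mul (g a b c : ℕ) : CTL ℕ :=
  iter g (isZero (g + 2)) (add (g + 5) (g + 2) a (g + 4)) b c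

/-- The formula stating that the relation `g` is the graph of a function. -/
def isFun (g : ℕ) : CTL ℕ :=
  allNum 0 <| exNum 1 <| allNum 2 <|
    conj (imp (rel g 0 2) (isEq 1 2)) (imp (isEq 1 2) (rel g 0 2))

/-- Existential quantification over the functions on the naturals, represented by their graphs. -/
def exFun (g : ℕ) (φ : CTL ℕ) : CTL ℕ :=
  ex g (conj (isFun g) φ)

/-- Universal quantification over the functions on the naturals, represented by their graphs. -/
def allFun (g : ℕ) (φ : CTL ℕ) : CTL ℕ :=
  all g (imp (isFun g) φ)

namespace Expresses

variable {S : TS ℕ} {V : ℕ → Set ℕ} {start step : CTL ℕ} {a b c g k n m x₀ : ℕ} {s : ℕ → ℕ}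

theorem iter (hS : S.Full) (hP : S.HasPairing) (hbg : b < g) (hcg : c < g)
    (hb : V b = {n}) (hc : V c = {m})
    (hstart : ∀ V', (∀ x < g, V' x = V x) → ∀ i, V' (g + 2) = {i} →
      Expresses S V' start (i = x₀))
    (hstep : ∀ V', (∀ x < g, V' x = V x) → ∀ i j, V' (g + 2) = {i} → V' (g + 4) = {j} →
      Expresses S V' step (j = s i)) :
    Expresses S V (iter g start step b c) (m = s^[n] x₀) := by
  have hbase (G : Set ℕ) := allNum hS (V := update V g G) (x := g + 1) fun i =>
    allNum hS (x := g + 2) fun j =>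
      ((isZero (x := g + 1) (n := i) (by simp)).conj
        (hstart _ (by grind) j (by simp))).imp
      (rel (g := g) (x := g + 1) (y := g + 2) (n := i) (m := j) (by simp) (by simp))
  have hclosed (G : Set ℕ) := allNum hS (V := update V g G) (x := g + 1) fun i =>
    allNum hS (x := g + 2) fun j => allNum hS (x := g + 3) fun i' =>
      allNum hS (x := g + 4) fun j' =>
      ((rel (g := g) (x := g + 1) (y := g + 2) (n := i) (m := j) (by simp) (by simp)).conj
        ((isSucc (x := g + 1) (y := g + 3) (n := i) (m := i') (by simp) (by simp)).conj
          (hstep _ (by grind) j j' (by simp) (by simp)))).imp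
      (rel (g := g) (x := g + 3) (y := g + 4) (n := i') (m := j') (by simp) (by simp))
  refine (all hS fun G => ((hbase G).conj (hclosed G)).imp
    (rel (x := b) (y := c) (n := n) (m := m) (by grind) (by grind))).congr ?_
  simp (disch := omega) only [update_self, update_of_ne]
  exact (hP.eq_iterate_iff ..).symm

theorem add (hS : S.Full) (hP : S.HasPairing) (hag : a < g) (hbg : b < g) (hcg : c < g)
    (ha : V a = {k}) (hb : V b = {n}) (hc : V c = {m}) :
    Expresses S V (add g a b c) (m = k + n) := by
  refine (iter hS hP hbg hcg hb hc (x₀ := k) (s := Nat.succ) (fun V' hV' i hi => ?_)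
    (fun _ _ _ _ hi hj => isSucc hi hj)).congr ?_
  · exact isEq hi ((hV' a hag).trans ha)
  · rw [Nat.succ_iterate, add_comm]

theorem mul (hS : S.Full) (hP : S.HasPairing) (hag : a < g) (hbg : b < g) (hcg : c < g)
    (ha : V a = {k}) (hb : V b = {n}) (hc : V c = {m}) :
    Expresses S V (mul g a b c) (m = k * n) := by
  refine (iter hS hP hbg hcg hb hc (x₀ := 0) (s := (· + k)) (fun _ _ _ hi => isZero hi)
    (fun V' hV' i j hi hj => ?_)).congr ?_
  · exact add hS hP (by omega) (by omega) (by omega) hi ((hV' a hag).trans ha) hj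
  · simp [mul_comm]

theorem isFun (hS : S.Full) (hg : 2 < g) :
    Expresses S V (isFun g) (∃ f : ℕ → ℕ, ∀ n m, S.Related (V g) n m ↔ m = f n) := by
  refine (allNum hS fun n => exNum hS fun k => allNum hS fun m =>
    ((rel (n := n) (m := m) ?_ ?_).imp (isEq (n := k) (m := m) ?_ ?_)).conj
      ((isEq (n := k) (m := m) ?_ ?_).imp (rel (n := n) (m := m) ?_ ?_))).congr ?_
  all_goals simp (disch := omega) only [update_self, update_of_ne]
  simp only [← iff_iff_implies_and_implies, Classical.skolem, eq_comm]

theorem exFun {φ : CTL ℕ} {p : (ℕ → ℕ) → Prop} (hS : S.Full) (hP : S.HasPairing) (hg : 2 < g)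
    (hφ : ∀ G u, (∀ n m, S.Related G n m ↔ m = u n) → Expresses S (update V g G) φ (p u)) :
    Expresses S V (exFun g φ) (∃ u, p u) := by
  refine (ex (p := fun G => ∃ u, (∀ n m, S.Related G n m ↔ m = u n) ∧ p u) hS
    fun G As hAs hV r => ?_).congr ⟨?_, ?_⟩
  · rw [sat_conj, isFun hS hg hAs hV, update_self]
    constructor
    · rintro ⟨⟨u, hu⟩, h⟩
      exact ⟨u, hu, (hφ G u hu hAs hV r).1 h⟩
    · rintro ⟨u, hu, h⟩
      exact ⟨⟨u, hu⟩, (hφ G u hu hAs hV r).2 h⟩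
  · rintro ⟨-, u, -, h⟩
    exact ⟨u, h⟩
  · rintro ⟨u, h⟩
    obtain ⟨G, hG⟩ := hP.exists_related_iff fun n m => m = u n
    exact ⟨G, u, hG, h⟩

theorem allFun {φ : CTL ℕ} {p : (ℕ → ℕ) → Prop} (hS : S.Full) (hP : S.HasPairing) (hg : 2 < g)
    (hφ : ∀ G u, (∀ n m, S.Related G n m ↔ m = u n) → Expresses S (update V g G) φ (p u)) :
    Expresses S V (allFun g φ) (∀ u, p u) := by
  intro As hAs hV r
  have := not_congr (exFun hS hP hg (fun G u hG => (hφ G u hG).neg) hAs hV r)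
  simpa [CTL.exFun, CTL.allFun, sat] using this

end Expresses

end CTL

/-- The path variable representing the number variable `x`. The variables below `20` are left to
auxiliary quantifiers. -/
def numVar (x : ℕ) : ℕ :=
  x + x + 20

/-- The path variable representing the function variable `f`. -/
def fnVar (f : ℕ) : ℕ :=
  f + f + 21

namespace CTL

/-- The formula `φ` about the variable `0`, stated about the variable `w` instead. -/
def evalTo (w : ℕ) (φ : CTL ℕ) : CTL ℕ :=
  exNum 0 (conj (isEq 0 w) φ)

/-- The formula stating that `φ 0` and `ψ 0` hold of some naturals which, put into the variables
`1` and `2`, satisfy `χ`. -/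
def exValues (φ ψ χ : CTL ℕ) : CTL ℕ :=
  exNum 1 <| exNum 2 <| conj (evalTo 1 φ) (conj (evalTo 2 ψ) χ)

end CTL

/-- The formula stating that `0` is the value of the term. -/
def ATerm.toCTL : ATerm → CTL ℕ
  | var x => .isEq 0 (numVar x)
  | zero => .isZero 0
  | one => .isOne 0
  | add s t => .exValues s.toCTL t.toCTL (.add 3 1 2 0)
  | mul s t => .exValues s.toCTL t.toCTL (.mul 3 1 2 0)
  | app f t => .exNum 1 (.conj (.evalTo 1 t.toCTL) (.rel (fnVar f) 1 0))

/-- The translation of second-order arithmetic into HyperCTL*: functions are represented by their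
graphs. -/
def SOForm.toCTL : SOForm → CTL ℕ
  | eq s t => .exNum 0 (.conj s.toCTL t.toCTL)
  | lt s t => .exValues s.toCTL t.toCTL (.isLt 1 2)
  | neg φ => .neg φ.toCTL
  | disj φ ψ => .disj φ.toCTL ψ.toCTL
  | exN x φ => .exNum (numVar x) φ.toCTL
  | allN x φ => .allNum (numVar x) φ.toCTL
  | exF f φ => .exFun (fnVar f) φ.toCTL
  | allF f φ => .allFun (fnVar f) φ.toCTL

/-- The sets `V` represent the values of the number variables in `N` and of the function variables
in `M`. -/
structure Represents (S : TS ℕ) (V : ℕ → Set ℕ) (N M : Set ℕ) (v : ℕ → ℕ) (F : ℕ → ℕ → ℕ) :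
    Prop where
  num : ∀ x ∈ N, V (numVar x) = {v x}
  fn : ∀ f ∈ M, ∀ n m, S.Related (V (fnVar f)) n m ↔ m = F f n

namespace Represents

variable {S : TS ℕ} {V : ℕ → Set ℕ} {N N' M M' : Set ℕ} {v : ℕ → ℕ} {F : ℕ → ℕ → ℕ}

theorem mono (h : Represents S V N M v F) (hN : N' ⊆ N) (hM : M' ⊆ M) :
    Represents S V N' M' v F :=
  ⟨fun x hx => h.num x (hN hx), fun f hf => h.fn f (hM hf)⟩

theorem update_of_lt (h : Represents S V N M v F) {x : ℕ} (hx : x < 20) (X : Set ℕ) :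
    Represents S (update V x X) N M v F where
  num y hy := by rw [update_of_ne (by grind [numVar]), h.num y hy]
  fn f hf := by rw [update_of_ne (by grind [fnVar])]; exact h.fn f hf

theorem update_numVar {x : ℕ} (h : Represents S V (N \ {x}) M v F) (n : ℕ) :
    Represents S (update V (numVar x) {n}) N M (update v x n) F where
  num y hy := by
    obtain rfl | hyx := eq_or_ne y x
    · simp
    · rw [update_of_ne (by grind [numVar]), update_of_ne hyx, h.num y ⟨hy, hyx⟩]
  fn f hf := by rw [update_of_ne (by grind [numVar, fnVar])]; exact h.fn f hf

theorem update_fnVar {f : ℕ} (h : Represents S V N (M \ {f}) v F) {G : Set ℕ} {u : ℕ → ℕ}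
    (hG : ∀ n m, S.Related G n m ↔ m = u n) :
    Represents S (update V (fnVar f) G) N M v (update F f u) where
  num y hy := by rw [update_of_ne (by grind [numVar, fnVar]), h.num y hy]
  fn g hg := by
    obtain rfl | hgf := eq_or_ne g f
    · simpa using hG
    · rw [update_of_ne (by grind [fnVar]), update_of_ne hgf]
      exact h.fn g ⟨hg, hgf⟩

end Represents

section Translation

variable {S : TS ℕ} {V : ℕ → Set ℕ} {v : ℕ → ℕ} {F : ℕ → ℕ → ℕ}

namespace ATerm

/-- The induction hypothesis for terms: `t.toCTL` expresses that `0` represents the value of `t`,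
under all values of the auxiliary variables. -/
def IsExpressed (S : TS ℕ) (v : ℕ → ℕ) (F : ℕ → ℕ → ℕ) (t : ATerm) : Prop :=
  ∀ ⦃V k⦄, Represents S V t.freeN t.freeF v F → V 0 = {k} →
    CTL.Expresses S V t.toCTL (k = t.eval v F)

open CTL.Expresses

variable {s t : ATerm}

theorem IsExpressed.evalTo (ht : t.IsExpressed S v F) (hS : S.Full)
    (hV : Represents S V t.freeN t.freeF v F) {w n : ℕ} (hw : w ≠ 0) (hn : V w = {n}) :
    CTL.Expresses S V (.evalTo w t.toCTL) (n = t.eval v F) := by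
  refine (exNum hS fun k => (isEq (n := k) (m := n) ?_ ?_).conj
    (ht (hV.update_of_lt (by decide) _) (update_self ..))).congr exists_eq_left
  · rw [update_self]
  · rw [update_of_ne hw, hn]

theorem IsExpressed.exValues (hs : s.IsExpressed S v F) (ht : t.IsExpressed S v F) (hS : S.Full)
    (hV : Represents S V (s.freeN ∪ t.freeN) (s.freeF ∪ t.freeF) v F) {χ : CTL ℕ}
    {p : ℕ → ℕ → Prop} (hχ : ∀ n m, CTL.Expresses S (update (update V 1 {n}) 2 {m}) χ (p n m)) :
    CTL.Expresses S V (.exValues s.toCTL t.toCTL χ) (p (s.eval v F) (t.eval v F)) := by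
  have hV' (n m : ℕ) := (hV.update_of_lt (x := 1) (by decide) {n}).update_of_lt (x := 2)
    (by decide) {m}
  refine (exNum hS fun n => exNum hS fun m =>
    (hs.evalTo hS ((hV' n m).mono Set.subset_union_left Set.subset_union_left)
      one_ne_zero (n := n) (by simp)).conj
    ((ht.evalTo hS ((hV' n m).mono Set.subset_union_right Set.subset_union_right)
      two_ne_zero (n := m) (by simp)).conj (hχ n m))).congr ?_
  simp

theorem isExpressed (hS : S.Full) (hP : S.HasPairing) (t : ATerm) : t.IsExpressed S v F := by
  induction t with
  | var x => exact fun V k hV hk => isEq hk (hV.num x rfl)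
  | zero => exact fun V k _ hk => isZero hk
  | one => exact fun V k _ hk => isOne hk
  | add s t ihs iht =>
    exact fun V k hV hk => ihs.exValues iht hS hV (p := fun n m => k = n + m) fun n m =>
      CTL.Expresses.add hS hP (by decide) (by decide) (by decide) (by simp) (by simp) (by simpa)
  | mul s t ihs iht =>
    exact fun V k hV hk => ihs.exValues iht hS hV (p := fun n m => k = n * m) fun n m =>
      CTL.Expresses.mul hS hP (by decide) (by decide) (by decide) (by simp) (by simp) (by simpa)
  | app f t iht =>
    intro V k hV hk
    refine (exNum hS fun n => (iht.evalTo hS ((hV.mono subset_rfl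
      (Set.subset_insert ..)).update_of_lt (by decide) _) one_ne_zero (update_self ..)).conj
      (rel (x := 1) (y := 0) (n := n) (m := k) (by simp) (by simpa))).congr ?_
    have hf := hV.fn f (Set.mem_insert ..)
    simp [update_of_ne (show fnVar f ≠ 1 by grind [fnVar]), hf, eval]

end ATerm

open CTL.Expresses

theorem SOForm.expresses_toCTL (hS : S.Full) (hP : S.HasPairing) (φ : SOForm)
    (hV : Represents S V φ.freeN φ.freeF v F) : CTL.Expresses S V φ.toCTL (φ.sat v F) := by
  induction φ generalizing V v F with
  | eq s t =>
    have hV' (k : ℕ) := hV.update_of_lt (x := 0) (by decide) {k}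
    exact (exNum hS fun k =>
      (s.isExpressed hS hP ((hV' k).mono Set.subset_union_left Set.subset_union_left)
        (update_self ..)).conj
      (t.isExpressed hS hP ((hV' k).mono Set.subset_union_right Set.subset_union_right)
        (update_self ..))).congr exists_eq_left
  | lt s t =>
    exact (s.isExpressed hS hP).exValues (t.isExpressed hS hP) hS hV (p := (· < ·)) fun n m =>
      isLt (by simp) (by simp)
  | neg φ ih => exact (ih hV).neg
  | disj φ ψ ihφ ihψ =>
    exact (ihφ (hV.mono Set.subset_union_left Set.subset_union_left)).disj
      (ihψ (hV.mono Set.subset_union_right Set.subset_union_right))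
  | exN x φ ih => exact exNum hS fun n => ih (hV.update_numVar n)
  | allN x φ ih => exact allNum hS fun n => ih (hV.update_numVar n)
  | exF f φ ih =>
    exact exFun hS hP (by grind [fnVar]) fun G u hG => ih (hV.update_fnVar hG)
  | allF f φ ih =>
    exact allFun hS hP (by grind [fnVar]) fun G u hG => ih (hV.update_fnVar hG)

end Translation

namespace CTL

variable {φ ψ : CTL ℕ} {a b g x y : ℕ}

@[simp]
theorem freeVars_conj : (conj φ ψ).freeVars = φ.freeVars ∪ ψ.freeVars := rfl

@[simp]
theorem freeVars_imp : (imp φ ψ).freeVars = φ.freeVars ∪ ψ.freeVars := rfl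

@[simp]
theorem freeVars_eventually : (eventually φ).freeVars = φ.freeVars := by
  simp [eventually, freeVars]

@[simp]
theorem freeVars_later : (later φ).freeVars = φ.freeVars :=
  freeVars_eventually

@[simp]
theorem freeVars_meet : (meet a x b y).freeVars = {x, y} := by
  simp [meet, freeVars, Set.pair_comm]

@[simp]
theorem freeVars_isZero : (isZero x).freeVars = {x} := rfl

@[simp]
theorem freeVars_isOne : (isOne x).freeVars = {x} := rfl

@[simp]
theorem freeVars_isEq : (isEq x y).freeVars = {x, y} := freeVars_meet

@[simp]
theorem freeVars_isLt : (isLt x y).freeVars = {x, y} := by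
  simp [isLt, freeVars, Set.pair_comm]

@[simp]
theorem freeVars_isSucc : (isSucc x y).freeVars = {x, y} := by
  simp [isSucc, freeVars, Set.pair_comm]

@[simp]
theorem freeVars_rel : (rel g x y).freeVars = {g, x, y} := by
  ext z
  simp only [rel, freeVars, freeVars_conj, freeVars_meet, Set.mem_union, Set.mem_sdiff,
    Set.mem_insert_iff, Set.mem_singleton_iff]
  grind

@[simp]
theorem freeVars_exNum : (exNum x φ).freeVars = φ.freeVars \ {x} := by
  simp [exNum, isNum, freeVars]

@[simp]
theorem freeVars_allNum : (allNum x φ).freeVars = φ.freeVars \ {x} := by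
  simp [allNum, isNum, freeVars]

theorem freeVars_add : (add 3 1 2 0).freeVars = {0, 1, 2} := by
  ext x
  simp only [add, iter, freeVars, freeVars_imp, freeVars_conj, freeVars_allNum, freeVars_isZero,
    freeVars_isEq, freeVars_isSucc, freeVars_rel, Set.mem_union, Set.mem_sdiff,
    Set.mem_insert_iff, Set.mem_singleton_iff]
  omega

theorem freeVars_mul : (mul 3 1 2 0).freeVars = {0, 1, 2} := by
  ext x
  simp only [mul, add, iter, freeVars, freeVars_imp, freeVars_conj, freeVars_allNum,
    freeVars_isZero, freeVars_isEq, freeVars_isSucc, freeVars_rel, Set.mem_union, Set.mem_sdiff,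
    Set.mem_insert_iff, Set.mem_singleton_iff]
  omega

theorem freeVars_exFun : (exFun g φ).freeVars = φ.freeVars \ {g} := by
  ext x
  simp only [exFun, isFun, freeVars, freeVars_imp, freeVars_conj, freeVars_allNum, freeVars_exNum,
    freeVars_isEq, freeVars_rel, Set.mem_union, Set.mem_sdiff, Set.mem_insert_iff,
    Set.mem_singleton_iff]
  grind

theorem freeVars_allFun : (allFun g φ).freeVars = φ.freeVars \ {g} := by
  ext x
  simp only [allFun, isFun, freeVars, freeVars_imp, freeVars_conj, freeVars_allNum,
    freeVars_exNum, freeVars_isEq, freeVars_rel, Set.mem_union, Set.mem_sdiff, Set.mem_insert_iff,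
    Set.mem_singleton_iff]
  grind

section Primrec

variable {α : Type*} [Primcodable α] {p q : α → CTL ℕ} {i j k : α → ℕ}

@[fun_prop]
theorem primrec_conj (hp : Primrec p) (hq : Primrec q) : Primrec fun a => conj (p a) (q a) := by
  unfold conj; fun_prop

@[fun_prop]
theorem primrec_imp (hp : Primrec p) (hq : Primrec q) : Primrec fun a => imp (p a) (q a) := by
  unfold imp; fun_prop

@[fun_prop]
theorem primrec_later (hp : Primrec p) : Primrec fun a => later (p a) := by
  unfold later eventually; fun_prop

@[fun_prop]
theorem primrec_meet (m n : ℕ) (hi : Primrec i) (hj : Primrec j) :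
    Primrec fun a => meet m (i a) n (j a) := by
  unfold meet; fun_prop

@[fun_prop]
theorem primrec_isEq (hi : Primrec i) (hj : Primrec j) : Primrec fun a => isEq (i a) (j a) := by
  unfold isEq; fun_prop

@[fun_prop]
theorem primrec_rel (hk : Primrec k) (hi : Primrec i) (hj : Primrec j) :
    Primrec fun a => rel (k a) (i a) (j a) := by
  unfold rel; fun_prop

@[fun_prop]
theorem primrec_isNum (hi : Primrec i) : Primrec fun a => isNum (i a) := by
  unfold isNum isLt; fun_prop

@[fun_prop]
theorem primrec_exNum (hi : Primrec i) (hp : Primrec p) : Primrec fun a => exNum (i a) (p a) := by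
  unfold exNum; fun_prop

@[fun_prop]
theorem primrec_allNum (hi : Primrec i) (hp : Primrec p) : Primrec fun a => allNum (i a) (p a) := by
  unfold allNum; fun_prop

@[fun_prop]
theorem primrec_isFun (hi : Primrec i) : Primrec fun a => isFun (i a) := by
  unfold isFun; fun_prop

@[fun_prop]
theorem primrec_exFun (hi : Primrec i) (hp : Primrec p) : Primrec fun a => exFun (i a) (p a) := by
  unfold exFun; fun_prop

@[fun_prop]
theorem primrec_allFun (hi : Primrec i) (hp : Primrec p) : Primrec fun a => allFun (i a) (p a) := by
  unfold allFun; fun_prop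

@[fun_prop]
theorem primrec_evalTo (hi : Primrec i) (hp : Primrec p) : Primrec fun a => evalTo (i a) (p a) := by
  unfold evalTo; fun_prop

@[fun_prop]
theorem primrec_exValues {χ : CTL ℕ} (hp : Primrec p) (hq : Primrec q) :
    Primrec fun a => exValues (p a) (q a) χ := by
  unfold exValues; fun_prop

end Primrec

end CTL

/-- The path variables representing the number variables in `N` and the function variables
in `M`. -/
def pathVars (N M : Set ℕ) : Set ℕ :=
  numVar '' N ∪ fnVar '' M

section pathVars

variable {N M : Set ℕ} {x f : ℕ}

theorem pathVars_union (N N' M M' : Set ℕ) :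
    pathVars (N ∪ N') (M ∪ M') = pathVars N M ∪ pathVars N' M' := by
  simp only [pathVars, Set.image_union, Set.union_union_union_comm]

theorem pathVars_eq_empty_iff : pathVars N M = ∅ ↔ N = ∅ ∧ M = ∅ := by
  simp [pathVars]

theorem le_of_mem_pathVars (hx : x ∈ pathVars N M) : 20 ≤ x := by
  obtain ⟨y, -, rfl⟩ | ⟨y, -, rfl⟩ := hx
  · exact Nat.le_add_left ..
  · exact (Nat.le_succ 20).trans (Nat.le_add_left ..)

theorem pathVars_sdiff_numVar : pathVars (N \ {x}) M = pathVars N M \ {numVar x} := by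
  ext z
  simp only [pathVars, Set.mem_union, Set.mem_image, Set.mem_sdiff, Set.mem_singleton_iff]
  grind [numVar, fnVar]

theorem pathVars_sdiff_fnVar : pathVars N (M \ {f}) = pathVars N M \ {fnVar f} := by
  ext z
  simp only [pathVars, Set.mem_union, Set.mem_image, Set.mem_sdiff, Set.mem_singleton_iff]
  grind [numVar, fnVar]

theorem freeVars_exValues_of_insert {φ ψ χ : CTL ℕ} {N' M' : Set ℕ} (hχ : χ.freeVars ⊆ {0, 1, 2})
    (hφ : φ.freeVars = insert 0 (pathVars N M)) (hψ : ψ.freeVars = insert 0 (pathVars N' M')) :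
    (CTL.exValues φ ψ χ).freeVars = χ.freeVars ∩ {0} ∪ pathVars (N ∪ N') (M ∪ M') := by
  ext z
  have := @hχ z
  have := @le_of_mem_pathVars N M z
  have := @le_of_mem_pathVars N' M' z
  simp only [CTL.exValues, CTL.evalTo, CTL.freeVars_exNum, CTL.freeVars_conj, CTL.freeVars_isEq,
    hφ, hψ, pathVars_union, Set.mem_inter_iff, Set.mem_union, Set.mem_sdiff, Set.mem_insert_iff,
    Set.mem_singleton_iff]
  grind

end pathVars

theorem ATerm.freeVars_toCTL (t : ATerm) :
    t.toCTL.freeVars = insert 0 (pathVars t.freeN t.freeF) := by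
  induction t with
  | var x => simp [toCTL, freeN, freeF, pathVars]
  | zero => simp [toCTL, freeN, freeF, pathVars]
  | one => simp [toCTL, freeN, freeF, pathVars]
  | add s t ihs iht =>
    rw [toCTL, freeVars_exValues_of_insert CTL.freeVars_add.subset ihs iht, CTL.freeVars_add]
    simp [freeN, freeF]
  | mul s t ihs iht =>
    rw [toCTL, freeVars_exValues_of_insert CTL.freeVars_mul.subset ihs iht, CTL.freeVars_mul]
    simp [freeN, freeF]
  | app f t iht =>
    ext z
    have := @le_of_mem_pathVars t.freeN t.freeF z
    simp only [toCTL, CTL.evalTo, CTL.freeVars_exNum, CTL.freeVars_conj, CTL.freeVars_isEq,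
      CTL.freeVars_rel, iht, freeN, freeF, pathVars, Set.image_insert_eq, Set.mem_union,
      Set.mem_sdiff, Set.mem_insert_iff, Set.mem_singleton_iff] at this ⊢
    grind [fnVar]

theorem SOForm.freeVars_toCTL (φ : SOForm) : φ.toCTL.freeVars = pathVars φ.freeN φ.freeF := by
  induction φ with
  | eq s t =>
    ext z
    have := @le_of_mem_pathVars s.freeN s.freeF z
    have := @le_of_mem_pathVars t.freeN t.freeF z
    simp only [toCTL, CTL.freeVars_exNum, CTL.freeVars_conj, s.freeVars_toCTL, t.freeVars_toCTL,
      freeN, freeF, pathVars_union, Set.mem_union, Set.mem_sdiff, Set.mem_insert_iff,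
      Set.mem_singleton_iff]
    grind
  | lt s t =>
    rw [toCTL, freeVars_exValues_of_insert (by simp) s.freeVars_toCTL t.freeVars_toCTL]
    simp [freeN, freeF]
  | neg _ ih => exact ih
  | disj φ ψ ihφ ihψ => rw [toCTL, CTL.freeVars, ihφ, ihψ, freeN, freeF, pathVars_union]
  | exN x φ ih => rw [toCTL, CTL.freeVars_exNum, ih, freeN, freeF, pathVars_sdiff_numVar]
  | allN x φ ih => rw [toCTL, CTL.freeVars_allNum, ih, freeN, freeF, pathVars_sdiff_numVar]
  | exF f φ ih => rw [toCTL, CTL.freeVars_exFun, ih, freeN, freeF, pathVars_sdiff_fnVar]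
  | allF f φ ih => rw [toCTL, CTL.freeVars_allFun, ih, freeN, freeF, pathVars_sdiff_fnVar]

@[fun_prop]
theorem primrec_numVar : Primrec numVar := by
  unfold numVar; fun_prop

@[fun_prop]
theorem primrec_fnVar : Primrec fnVar := by
  unfold fnVar; fun_prop

@[fun_prop]
theorem ATerm.primrec_toCTL : Primrec ATerm.toCTL :=
  primrec_of_map_decode <| primrec_map_partialInv_code
    (var := fun x => .isEq 0 (numVar x)) (zero := .isZero 0) (one := .isOne 0)
    (add := fun φ ψ => .exValues φ ψ (.add 3 1 2 0))
    (mul := fun φ ψ => .exValues φ ψ (.mul 3 1 2 0))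
    (app := fun f φ => .exNum 1 (.conj (.evalTo 1 φ) (.rel (fnVar f) 1 0)))

@[fun_prop]
theorem SOForm.primrec_toCTL : Primrec SOForm.toCTL :=
  primrec_of_map_decode <| primrec_map_partialInv_code
    (eq := fun s t => .exNum 0 (.conj s.toCTL t.toCTL))
    (lt := fun s t => .exValues s.toCTL t.toCTL (.isLt 1 2))
    (neg := .neg) (disj := .disj) (exN := fun x => .exNum (numVar x))
    (allN := fun x => .allNum (numVar x)) (exF := fun f => .exFun (fnVar f))
    (allF := fun f => .allFun (fnVar f))

/-! ### Reduction from second-order arithmetic -/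

namespace TS

variable {S : TS ℕ}

theorem reachable_iff {v : S.V} : S.Reachable v ↔ ∃ ρ, S.IsInitialPath ρ ∧ ∃ n, ρ n = v := by
  constructor
  · intro hv
    obtain ⟨ρ, hρ, hρ₀, hn⟩ := exists_isPath_of_reflTransGen hv
    exact ⟨ρ, ⟨hρ, hρ₀⟩, hn⟩
  · rintro ⟨ρ, hρ, n, rfl⟩
    induction n with
    | zero => exact hρ.2 ▸ .refl
    | succ n ih => exact ih.tail (hρ.1 n)

theorem forall_reachable_iff {p : S.V → Prop} :
    (∀ v, S.Reachable v → p v) ↔ ∀ ρ, S.IsPath ρ → ρ 0 = S.vI → ∀ n, p (ρ n) := by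
  simp only [reachable_iff]
  constructor
  · exact fun h ρ hρ hρ₀ n => h _ ⟨ρ, ⟨hρ, hρ₀⟩, n, rfl⟩
  · rintro h v ⟨ρ, ⟨hρ, hρ₀⟩, n, rfl⟩
    exact h ρ hρ hρ₀ n

theorem exists_isPath_one_iff {v : S.V} {p : S.V → Prop} :
    (∃ σ, S.IsPath σ ∧ σ 0 = v ∧ p (σ 1)) ↔ ∃ w, S.E v w ∧ p w := by
  constructor
  · rintro ⟨σ, hσ, rfl, h⟩
    exact ⟨σ 1, hσ 0, h⟩
  · rintro ⟨w, hw, h⟩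
    obtain ⟨σ, hσ, rfl⟩ := S.exists_isPath w
    exact ⟨_, hσ.cons hw, rfl, h⟩

/-- Every reachable vertex has a successor with the proposition `0` and one without. -/
def Splits (S : TS ℕ) : Prop :=
  ∀ v, S.Reachable v → (∃ w, S.E v w ∧ 0 ∈ S.lab w) ∧ ∃ w, S.E v w ∧ 0 ∉ S.lab w

theorem Splits.full (hS : S.Splits) : S.Full := by
  intro X
  obtain ⟨ρ, hρ, hρ₀, hX⟩ := exists_isPath_of_step (S := S) (v := S.vI)
    (P := fun n v => S.Reachable v ∧ ∀ m, n = m + 1 → (0 ∈ S.lab v ↔ m ∈ X))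
    ⟨.refl, by simp⟩ fun n v ⟨hv, _⟩ => by
      obtain ⟨⟨w, hw, h₁⟩, w', hw', h₀⟩ := hS v hv
      by_cases hn : n ∈ X
      · exact ⟨w, hw, hv.tail hw, by simp [h₁, hn]⟩
      · exact ⟨w', hw', hv.tail hw', by simp [h₀, hn]⟩
  exact ⟨ρ, ⟨hρ, hρ₀⟩, Set.ext fun n => (hX (n + 1)).2 n rfl⟩

end TS

namespace CTL

/-- The formula stating that the transition system `Splits`. -/
def splits : CTL ℕ :=
  all 0 <| neg <| eventually <| neg <|
    conj (ex 1 (next (atom 0 1))) (ex 1 (next (neg (atom 0 1))))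

/-- The formula stating that the transition system `HasPairing`. -/
def hasPairing : CTL ℕ :=
  conj (allNum 0 <| allNum 1 <| ex 2 <| rel 2 0 1) <|
    allNum 0 <| allNum 1 <| allNum 2 <| allNum 3 <| allNum 4 <|
      imp (conj (rel 4 0 1) (rel 4 2 3)) (conj (isEq 0 2) (isEq 1 3))

namespace Expresses

variable {S : TS ℕ} {V : ℕ → Set ℕ}

theorem splits : Expresses S V splits S.Splits := by
  intro As hAs _ r
  simp only [CTL.splits, sat, sat_eventually, sat_conj, not_exists, not_not, update_self,
    zero_add, (hAs r).2]
  simp only [TS.exists_isPath_one_iff (p := fun w => 0 ∈ S.lab w),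
    TS.exists_isPath_one_iff (p := fun w => 0 ∉ S.lab w), TS.Splits, TS.forall_reachable_iff]

theorem hasPairing (hS : S.Full) : Expresses S V hasPairing S.HasPairing := by
  refine ((allNum hS fun n => allNum hS fun m => ex hS fun G =>
    rel (n := n) (m := m) ?_ ?_).conj
    (allNum hS fun n => allNum hS fun m => allNum hS fun n' => allNum hS fun m' =>
      allNum hS fun k => ((rel (n := n) (m := m) ?_ ?_).conj
        (rel (n := n') (m := m') ?_ ?_)).imp
          ((isEq (n := n) (m := n') ?_ ?_).conj (isEq (n := m) (m := m') ?_ ?_)))).congr ?_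
  all_goals simp (disch := decide) only [update_self, update_of_ne]
  simp only [TS.Related, Set.mem_singleton_iff, exists_eq_left]
  constructor
  · rintro ⟨htotal, hinj⟩
    refine ⟨fun n m => ?_, fun h h' => hinj _ _ _ _ _ ⟨h, h'⟩⟩
    obtain ⟨_, k, _, hk⟩ := htotal n m
    exact ⟨k, hk⟩
  · refine fun h => ⟨fun n m => ?_, fun n m n' m' k hk => h.pairCode_inj hk.1 hk.2⟩
    obtain ⟨k, hk⟩ := h.exists_pairCode n m
    exact ⟨{k}, k, rfl, hk⟩

end Expresses

end CTL

/-- The HyperCTL* sentence whose models are the transition systems that can code sets and pairs,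
provided that `φ` is true. The leading quantifier only serves to guard the temporal operators. -/
def SOForm.toSentence (φ : SOForm) : CTL ℕ :=
  .ex 0 (.conj .splits (.conj .hasPairing φ.toCTL))

namespace SOForm

variable {φ : SOForm}

theorem models_toSentence_iff {S : TS ℕ} (hφ : φ.IsSentence) :
    CModels S φ.toSentence ↔ S.Splits ∧ S.HasPairing ∧ SOTrue φ := by
  have sat_iff {As : ℕ → ℕ → S.V} (hAs : ∀ x, S.IsInitialPath (As x)) (r : ℕ) :
      (CTL.conj .splits (.conj .hasPairing φ.toCTL)).sat S As r ↔
        S.Splits ∧ S.HasPairing ∧ SOTrue φ := by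
    rw [CTL.sat_conj, CTL.sat_conj, CTL.Expresses.splits hAs (fun _ => rfl)]
    refine and_congr_right fun hS => ?_
    rw [CTL.Expresses.hasPairing hS.full hAs fun _ => rfl]
    exact and_congr_right fun hP => φ.expresses_toCTL hS.full hP
      ⟨by simp [hφ.1], by simp [hφ.2]⟩ hAs (fun _ => rfl) r
  have sat_ex_iff {ρ : ℕ → S.V} (hρ : S.IsInitialPath ρ) :
      φ.toSentence.sat S (fun _ => ρ) 0 ↔ S.Splits ∧ S.HasPairing ∧ SOTrue φ := by
    constructor
    · rintro ⟨σ, hσ, hσ₀, h⟩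
      refine (sat_iff (fun x => ?_) 0).1 h
      obtain rfl | hx := eq_or_ne x 0
      · simpa using ⟨hσ, hσ₀.trans hρ.2⟩
      · simpa [hx] using hρ
    · intro h
      refine ⟨ρ, hρ.1, rfl, ?_⟩
      rw [update_eq_self_iff.2 rfl]
      exact (sat_iff (fun _ => hρ) 0).2 h
  obtain ⟨ρ, hρ, hρ₀⟩ := S.exists_isPath S.vI
  exact ⟨fun h => (sat_ex_iff ⟨hρ, hρ₀⟩).1 (h ρ hρ hρ₀),
    fun h σ hσ hσ₀ => (sat_ex_iff ⟨hσ, hσ₀⟩).2 h⟩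

theorem isSentence_toSentence_iff : φ.toSentence.IsSentence ↔ φ.IsSentence := by
  have freeVars_splits : CTL.splits.freeVars = ∅ := by
    simp [CTL.splits, CTL.freeVars]
  have freeVars_hasPairing : CTL.hasPairing.freeVars = ∅ := by
    ext x
    simp only [CTL.hasPairing, CTL.freeVars, CTL.freeVars_conj, CTL.freeVars_imp,
      CTL.freeVars_allNum, CTL.freeVars_isEq, CTL.freeVars_rel, Set.mem_union, Set.mem_sdiff,
      Set.mem_insert_iff, Set.mem_singleton_iff, Set.mem_empty_iff_false]
    grind
  have sdiff_zero : pathVars φ.freeN φ.freeF \ {0} = pathVars φ.freeN φ.freeF :=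
    Set.sdiff_singleton_eq_self fun h => by simpa using le_of_mem_pathVars h
  simp [CTL.IsSentence, toSentence, CTL.guarded, CTL.freeVars, freeVars_splits,
    freeVars_hasPairing, φ.freeVars_toCTL, sdiff_zero, pathVars_eq_empty_iff, IsSentence]

theorem primrec_toSentence : Primrec toSentence := by
  unfold toSentence; fun_prop

end SOForm

namespace TS

/-- The vertices of `clockSystem`. -/
@[ext]
structure Clock where
  time : ℕ
  mark : Bool
  fst : ℕ
  snd : ℕ

instance : Countable Clock :=
  Injective.countable (f := fun v => (v.time, v.mark, v.fst, v.snd)) fun _ _ h => by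
    simpa [Clock.ext_iff] using h

/-- `a'` is the value after time `t` of a register with value `a` that may once be overwritten
with the current time; the value `0` means that this has not happened yet. -/
def Latch (t a a' : ℕ) : Prop :=
  a' = a ∨ a = 0 ∧ a' = t + 1

/-- A countable, finitely branching transition system that can code sets and pairs: on a path with
the values `n + 1` and `m + 1` in the registers, the pair `(n, m)` is coded by
`Nat.pair (n + 1) (m + 1) - 1`. -/
def clockSystem : TS ℕ where
  V := Clock
  E v w := w.time = v.time + 1 ∧ Latch v.time v.fst w.fst ∧ Latch v.time v.snd w.snd
  vI := ⟨0, false, 0, 0⟩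
  lab v := {a | a = 0 ∧ v.mark ∨ a = 1 ∧ v.fst = v.time ∨ a = 2 ∧ v.snd = v.time ∨
    a = 3 ∧ v.fst ≠ 0 ∧ v.snd ≠ 0 ∧ Nat.pair v.fst v.snd = v.time}
  succ v := ⟨⟨v.time + 1, false, v.fst, v.snd⟩, rfl, .inl rfl, .inl rfl⟩

theorem eq_of_latch {a : ℕ → ℕ} (ha : ∀ t, Latch t (a t) (a (t + 1))) {n m : ℕ} (hn : a n ≠ 0)
    (hm : a m ≠ 0) : a n = a m := by
  have eq_of_le {n m : ℕ} (hnm : n ≤ m) (hn : a n ≠ 0) : a m = a n := by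
    induction m, hnm using Nat.le_induction with
    | base => rfl
    | succ m _ ih => exact (ha m).elim (·.trans ih) fun h => absurd (ih.symm.trans h.1) hn
  obtain h | h := Nat.le_total n m
  · exact (eq_of_le h hn).symm
  · exact eq_of_le h hm

theorem latch_ite (t n : ℕ) :
    Latch t (if n < t then n + 1 else 0) (if n < t + 1 then n + 1 else 0) := by
  unfold Latch
  grind

theorem finitelyBranching_clockSystem : clockSystem.FinitelyBranching := by
  rintro ⟨t, b, x, y⟩
  have hfin : (Set.univ ×ˢ {x, t + 1} ×ˢ {y, t + 1} : Set (Bool × ℕ × ℕ)).Finite := by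
    toFinite_tac
  refine (hfin.image fun p => Clock.mk (t + 1) p.1 p.2.1 p.2.2).subset ?_
  rintro ⟨_, b', x', y'⟩ ⟨rfl, hx, hy⟩
  exact ⟨(b', x', y'), ⟨trivial, hx.imp_right And.right, hy.imp_right And.right⟩, rfl⟩

theorem splits_clockSystem : clockSystem.Splits := fun v _ =>
  have hE (b : Bool) : clockSystem.E v ⟨v.time + 1, b, v.fst, v.snd⟩ := ⟨rfl, .inl rfl, .inl rfl⟩
  ⟨⟨_, hE true, by simp [clockSystem]⟩, ⟨_, hE false, by simp [clockSystem]⟩⟩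

theorem pairCode_clockSystem_iff {n m k : ℕ} :
    clockSystem.PairCode n m k ↔ k + 1 = Nat.pair (n + 1) (m + 1) := by
  constructor
  · rintro ⟨ρ, ⟨hρ, hρ₀⟩, hn, hm, hk⟩
    have time_eq (i : ℕ) : (ρ i).time = i := by
      induction i with
      | zero => exact congrArg Clock.time hρ₀
      | succ i ih => rw [(hρ i).1, ih]
    have latch (t : ℕ) : Latch t (ρ t).fst (ρ (t + 1)).fst ∧ Latch t (ρ t).snd (ρ (t + 1)).snd :=
      by simpa only [time_eq] using (hρ t).2
    replace hn : (ρ (n + 1)).fst = n + 1 := by simpa [marks, clockSystem, time_eq] using hn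
    replace hm : (ρ (m + 1)).snd = m + 1 := by simpa [marks, clockSystem, time_eq] using hm
    obtain ⟨hfst, hsnd, hpair⟩ : (ρ (k + 1)).fst ≠ 0 ∧ (ρ (k + 1)).snd ≠ 0 ∧
        Nat.pair (ρ (k + 1)).fst (ρ (k + 1)).snd = k + 1 := by
      simpa [marks, clockSystem, time_eq] using hk
    have fst_eq := eq_of_latch (fun t => (latch t).1) (n := n + 1) (by simp [hn]) hfst
    have snd_eq := eq_of_latch (fun t => (latch t).2) (n := m + 1) (by simp [hm]) hsnd
    rw [← hpair, ← fst_eq, ← snd_eq, hn, hm]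
  · intro hk
    refine ⟨fun i => Clock.mk i false (if n < i then n + 1 else 0) (if m < i then m + 1 else 0),
      ⟨fun i => ⟨rfl, latch_ite i n, latch_ite i m⟩, rfl⟩, ?_, ?_, ?_⟩
    · simp [marks, clockSystem]
    · simp [marks, clockSystem]
    · have hnk : n ≤ k := Nat.succ_le_succ_iff.1 (hk.ge.trans' (Nat.left_le_pair ..))
      have hmk : m ≤ k := Nat.succ_le_succ_iff.1 (hk.ge.trans' (Nat.right_le_pair ..))
      simp [marks, clockSystem, hnk, hmk, hk]

theorem hasPairing_clockSystem : clockSystem.HasPairing where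
  exists_pairCode n m := by
    have hpos : 0 < Nat.pair (n + 1) (m + 1) := (Nat.left_le_pair ..).trans_lt' n.succ_pos
    exact ⟨_, pairCode_clockSystem_iff.2 (Nat.sub_add_cancel hpos)⟩
  pairCode_inj h h' := by
    simpa [pairCode_clockSystem_iff.1 h, Nat.pair_eq_pair] using pairCode_clockSystem_iff.1 h'

end TS

namespace SOForm

theorem soTrue_iff_exists_model {P : TS ℕ → Prop} (hP : P TS.clockSystem) (φ : SOForm) :
    (φ.IsSentence ∧ SOTrue φ) ↔
      φ.toSentence.IsSentence ∧ ∃ S, P S ∧ CModels S φ.toSentence := by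
  rw [isSentence_toSentence_iff]
  refine and_congr_right fun hφ => ?_
  simp only [models_toSentence_iff hφ]
  exact ⟨fun h => ⟨_, hP, TS.splits_clockSystem, TS.hasPairing_clockSystem, h⟩,
    fun ⟨_, _, _, _, h⟩ => h⟩

theorem manyOneRed_soTruthCodes {P : TS ℕ → Prop} (hP : P TS.clockSystem) :
    ManyOneRed SOTruthCodes
      (encode '' {φ : CTL ℕ | φ.IsSentence ∧ ∃ S, P S ∧ CModels S φ}) := by
  rw [SOTruthCodes_eq]
  refine manyOneRed_of_primrec primrec_toSentence (soTrue_iff_exists_model hP)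
    (b₀ := .atom 0 0) fun h => ?_
  simpa [CTL.freeVars] using h.1.1

end SOForm

theorem manyOneRed_soTruthCodes_countableSatCodes :
    ManyOneRed SOTruthCodes CTLCountableSatCodes := by
  rw [CTLCountableSatCodes_eq]
  exact SOForm.manyOneRed_soTruthCodes (inferInstanceAs (Countable TS.Clock))

theorem manyOneRed_soTruthCodes_finBranchSatCodes :
    ManyOneRed SOTruthCodes CTLFinBranchSatCodes := by
  rw [CTLFinBranchSatCodes_eq]
  exact SOForm.manyOneRed_soTruthCodes TS.finitelyBranching_clockSystem

/-- **HyperCTL* countable satisfiability, HyperCTL* finitely-branching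
satisfiability, and truth in second-order arithmetic are pairwise effectively
interreducible** (many-one, via total computable functions on codes). -/
theorem hyperctl_variants_interreducible :
    ManyOneRed CTLCountableSatCodes CTLFinBranchSatCodes ∧
    ManyOneRed CTLFinBranchSatCodes CTLCountableSatCodes ∧
    ManyOneRed CTLCountableSatCodes SOTruthCodes ∧
    ManyOneRed SOTruthCodes CTLCountableSatCodes ∧
    ManyOneRed CTLFinBranchSatCodes SOTruthCodes ∧
    ManyOneRed SOTruthCodes CTLFinBranchSatCodes := by
  have countable_le_truth := manyOneRed_countableSatCodes_soTruthCodes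
  have finBranch_le_truth := manyOneRed_finBranchSatCodes_soTruthCodes
  have truth_le_countable := manyOneRed_soTruthCodes_countableSatCodes
  have truth_le_finBranch := manyOneRed_soTruthCodes_finBranchSatCodes
  exact ⟨countable_le_truth.trans truth_le_finBranch, finBranch_le_truth.trans truth_le_countable,
    countable_le_truth, truth_le_countable, finBranch_le_truth, truth_le_finBranch⟩
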